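/- Let n ≥ 2 and let f₁, f₂ ∈ Q₀ⁿ. Assume that for every unit vector θ ∈ ℝⁿ one has ‖P_{θ⊥} f₁‖_{L¹(θ⊥)} ≤ ‖P_{θ⊥} f₂‖_{L¹(θ⊥)}. Then ‖f₁‖_∞^{1/n} · ‖f₁‖₁^{(n−1)/n} ≤ 8·e·√n · ‖f₂‖_∞^{1/n} · ‖f₂‖₁^{(n−1)/n}. -/

import Mathlib

open MeasureTheory

noncomputable section

/-- `ℝⁿ` with its Euclidean structure. -/
abbrev Eucl (n : ℕ) := EuclideanSpace ℝ (Fin n)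

/-- `f : ℝⁿ → [0,∞)` is log-concave:
`f(tx+(1−t)y) ≥ f(x)^t · f(y)^(1−t)` for all `x, y` and `t ∈ (0,1)`. -/
def IsLogConcave {n : ℕ} (f : Eucl n → ℝ) : Prop :=
  ∀ x y : Eucl n, ∀ t : ℝ, 0 < t → t < 1 →
    f x ^ t * f y ^ (1 - t) ≤ f (t • x + (1 - t) • y)

/-- The class `Q₀ⁿ`: nonnegative, log-concave, upper semicontinuous, integrable
functions with positive integral. -/
def MemQ0 {n : ℕ} (f : Eucl n → ℝ) : Prop :=
  (∀ x, 0 ≤ f x) ∧ IsLogConcave f ∧ UpperSemicontinuous f ∧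
    Integrable f ∧ 0 < ∫ x, f x

/-- `‖f‖_∞ = sup f`. -/
def supNorm {n : ℕ} (f : Eucl n → ℝ) : ℝ := ⨆ x, f x

/-- `‖f‖_p = (∫ f^p)^(1/p)`. -/
def lpNorm {n : ℕ} (p : ℝ) (f : Eucl n → ℝ) : ℝ := (∫ x, f x ^ p) ^ (1 / p)

/-- `‖P_H f‖_{L¹(H)} = ∫_H sup_{z ∈ H⊥} f(y+z) dλ_H(y)`, the `L¹(H)`-norm of the
projection of `f` onto the subspace `H` (with the Lebesgue measure on `H` induced
by the Euclidean structure). -/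
def projL1 {n : ℕ} (f : Eucl n → ℝ) (H : Submodule ℝ (Eucl n)) : ℝ :=
  ∫ y : H, ⨆ z : Hᗮ, f ((y : Eucl n) + (z : Eucl n))

/-- `‖S_H f‖_{L¹(H)} = ∫_H f dλ_H`, the integral of the section `f|_H`. -/
def sectL1 {n : ℕ} (f : Eucl n → ℝ) (H : Submodule ℝ (Eucl n)) : ℝ :=
  ∫ y : H, f (y : Eucl n)


lemma lint_affine {n : ℕ} (g : Eucl n → ENNReal) (a : ℝ) (ha : 0 < a) (b : Eucl n) :
    ∫⁻ x, g (a • x + b) = ENNReal.ofReal ((a ^ n)⁻¹) * ∫⁻ x, g x := by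
  have h1 : ∫⁻ x, g x = ∫⁻ x, g (x + b) := (lintegral_add_right_eq_self g b).symm
  rw [h1]
  have h2 := Measure.map_addHaar_smul (volume : Measure (Eucl n)) ha.ne'
  have h3 : ∫⁻ x, g (x + b) ∂(Measure.map (a • ·) (volume : Measure (Eucl n)))
      = ∫⁻ x, g (a • x + b) := by
    have he : MeasurableEmbedding (fun x : Eucl n => a • x) :=
      (Homeomorph.smulOfNeZero a ha.ne').measurableEmbedding
    exact he.lintegral_map _
  rw [← h3, h2, lintegral_smul_measure]
  simp [abs_of_pos ha]

lemma quasi {n : ℕ} {f : Eucl n → ℝ} (h0 : ∀ x, 0 ≤ f x) (hf : IsLogConcave f) (x y : Eucl n)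
    (a b m : ℝ) (ha : 0 ≤ a) (hb : 0 ≤ b) (hab : a + b = 1) (hm : 0 ≤ m) (hx : m ≤ f x)
    (hy : m ≤ f y) : m ≤ f (a • x + b • y) := by
  rcases ha.eq_or_lt with rfl | ha
  · have : b = 1 := by linarith
    simpa [this] using hy
  rcases hb.eq_or_lt with rfl | hb
  · have : a = 1 := by linarith
    simpa [this] using hx
  have h := hf x y a ha (by linarith)
  have e : 1 - a = b := by linarith
  rw [e] at h
  refine le_trans ?_ h
  calc m = m ^ a * m ^ b := by
        rcases hm.eq_or_lt with rfl | hm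
        · rw [Real.zero_rpow ha.ne']; simp
        · rw [← Real.rpow_add hm, hab, Real.rpow_one]
    _ ≤ _ := by
        have := Real.rpow_nonneg (h0 x) a
        gcongr

lemma meas_of_mem {n : ℕ} {f : Eucl n → ℝ} (hf : MemQ0 f) : Measurable f :=
  hf.2.2.1.measurable

lemma bdd_of_mem {n : ℕ} {f : Eucl n → ℝ} (hf : MemQ0 f) : BddAbove (Set.range f) := by
  have hm := meas_of_mem hf
  obtain ⟨h0, hl, hu, hi, hp⟩ := hf
  set J := ∫⁻ x, ENNReal.ofReal (f x ^ (1/2:ℝ)) with hJ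
  set A := ENNReal.ofReal (((1/2:ℝ) ^ n)⁻¹) * ∫⁻ x, ENNReal.ofReal (f x) with hA
  have hAtop : A ≠ ⊤ := by
    rw [hA, ← ofReal_integral_eq_lintegral_ofReal hi (Filter.Eventually.of_forall h0)]
    exact ENNReal.mul_ne_top ENNReal.ofReal_ne_top ENNReal.ofReal_ne_top
  have key : ∀ x, ENNReal.ofReal (f x ^ (1/2:ℝ)) * J ≤ A := by
    intro x
    have := lint_affine (fun y => ENNReal.ofReal (f y)) (1/2) (by norm_num) ((1/2:ℝ) • x)
    rw [hA, ← this, hJ, ← lintegral_const_mul' _ _ ENNReal.ofReal_ne_top]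
    refine lintegral_mono fun y => ?_
    rw [← ENNReal.ofReal_mul (by have := h0 x; positivity)]
    refine ENNReal.ofReal_le_ofReal ?_
    have h := hl x y (1/2) (by norm_num) (by norm_num)
    have e : (1 - 1/2 : ℝ) = 1/2 := by norm_num
    rw [e] at h
    rw [add_comm]
    exact h
  have hJ0 : J ≠ 0 := by
    intro hz
    rw [hJ, lintegral_eq_zero_iff (by fun_prop)] at hz
    have : f =ᵐ[volume] 0 := by
      filter_upwards [hz] with x hx
      simp only [Pi.zero_apply, ENNReal.ofReal_eq_zero] at hx
      by_contra hne
      have : 0 < f x := lt_of_le_of_ne (h0 x) (Ne.symm hne)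
      have : 0 < f x ^ (1/2:ℝ) := by positivity
      linarith
    rw [integral_congr_ae this] at hp
    simp at hp
  refine ⟨((A / J).toReal) ^ 2, ?_⟩
  rintro _ ⟨x, rfl⟩
  have h1 : ENNReal.ofReal (f x ^ (1/2:ℝ)) ≤ A / J :=
    (ENNReal.le_div_iff_mul_le (Or.inl hJ0) (Or.inr hAtop)).2 (key x)
  have h2 := (ENNReal.ofReal_le_iff_le_toReal (ENNReal.div_ne_top hAtop hJ0)).1 h1
  have h3 : f x = (f x ^ (1/2:ℝ)) ^ 2 := by
    rw [← Real.rpow_natCast, ← Real.rpow_mul (h0 x)]; norm_num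
  rw [h3]
  have := h0 x
  gcongr

lemma le_supNorm {n : ℕ} {f : Eucl n → ℝ} (hf : MemQ0 f) (x : Eucl n) : f x ≤ supNorm f :=
  le_ciSup (bdd_of_mem hf) x

lemma supNorm_pos {n : ℕ} {f : Eucl n → ℝ} (hf : MemQ0 f) : 0 < supNorm f := by
  by_contra h
  have : f = 0 := by
    ext x
    exact le_antisymm ((le_supNorm hf x).trans (not_lt.1 h)) (hf.1 x)
  have h2 := hf.2.2.2.2
  rw [this] at h2
  simp at h2

/-- Fubini along the line spanned by `θ`. -/
lemma fubini_line {n : ℕ} (θ : Eucl n) (hθ : ‖θ‖ = 1) (Φ : Eucl n → ENNReal)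
    (hΦ : Measurable Φ) :
    ∫⁻ x, Φ x = ∫⁻ y : (Submodule.span ℝ {θ})ᗮ, ∫⁻ s : ℝ, Φ ((y : Eucl n) + s • θ) := by
  set K := Submodule.span ℝ {θ} with hK
  have mp0 : MeasurePreserving
      (Prod.map (LinearIsometryEquiv.toSpanUnitSingleton (𝕜 := ℝ) θ hθ) (id : Kᗮ → Kᗮ))
      (volume.prod volume) (volume.prod volume) :=
    (LinearIsometryEquiv.measurePreserving
      (LinearIsometryEquiv.toSpanUnitSingleton (𝕜 := ℝ) θ hθ)).prod
      (MeasurePreserving.id volume)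
  have mp1 : MeasurePreserving (@WithLp.toLp 2 (K × Kᗮ)) := WithLp.volume_preserving_toLp _ _
  have mp2 : MeasurePreserving K.orthogonalDecomposition.symm :=
    K.orthogonalDecomposition.symm.measurePreserving
  have mp := (mp2.comp mp1).comp mp0
  rw [← mp.lintegral_comp hΦ]
  refine (lintegral_prod_symm _ (hΦ.comp mp.measurable).aemeasurable).trans ?_
  refine lintegral_congr fun y => lintegral_congr fun s => ?_
  have : (K.orthogonalDecomposition.symm (WithLp.toLp 2 ((⟨s • θ, by
      rw [hK]; exact Submodule.smul_mem _ _ (Submodule.mem_span_singleton_self θ)⟩ : K), y)))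
      = (y : Eucl n) + s • θ := by
    simp [Submodule.orthogonalDecomposition_symm_apply, add_comm]
  rw [← this]
  simp only [Function.comp, Prod.map, LinearIsometryEquiv.toSpanUnitSingleton_apply, id]

lemma line_lemma (φ G : ℝ → ENNReal) (a : ℝ) (ha : 0 ≤ a)
    (h : ∀ x τ, 0 ≤ τ → τ ≤ a → φ (x - τ) ≤ G x) (p : ℝ) :
    (∫⁻ x, φ x) + ENNReal.ofReal a * φ p ≤ ∫⁻ x, G x := by
  classical
  have e1 : ∫⁻ x, φ x = (∫⁻ x in Set.Iio p, φ x) + ∫⁻ x in Set.Ici p, φ x := by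
    rw [← lintegral_add_compl φ (measurableSet_Iio (a := p)), Set.compl_Iio]
  have e2 : ∫⁻ x in Set.Ici p, φ x = ∫⁻ x in Set.Ici (p + a), φ (x - a) := by
    have h1 := lintegral_sub_right_eq_self (μ := volume) ((Set.Ici p).indicator φ) a
    rw [← lintegral_indicator measurableSet_Ici, ← lintegral_indicator measurableSet_Ici, ← h1]
    refine lintegral_congr fun x => ?_
    simp only [Set.indicator, Set.mem_Ici]
    congr 1
    exact propext ⟨fun h => by linarith, fun h => by linarith⟩
  have e3 : ENNReal.ofReal a * φ p = ∫⁻ x in Set.Ico p (p + a), φ p := by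
    simp [mul_comm]
  have e4 : ∫⁻ x, G x = (∫⁻ x in Set.Iio p, G x) + ((∫⁻ x in Set.Ico p (p+a), G x)
      + ∫⁻ x in Set.Ici (p+a), G x) := by
    rw [← lintegral_add_compl G (measurableSet_Iio (a := p)), Set.compl_Iio,
      ← lintegral_union (A := Set.Ico p (p+a)) measurableSet_Ici, Set.Ico_union_Ici_eq_Ici (by linarith)]
    exact Set.disjoint_left.2 fun x hx hx' => not_lt.2 hx' hx.2
  rw [e1, e2, e3, e4, add_assoc, add_comm (∫⁻ x in Set.Ici (p + a), φ (x - a))]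
  refine add_le_add ?_ (add_le_add ?_ ?_)
  · exact lintegral_mono fun x => by simpa using h x 0 le_rfl ha
  · refine setLIntegral_mono' measurableSet_Ico fun x hx => ?_
    simpa using h x (x - p) (by linarith [hx.1]) (by linarith [hx.2])
  · exact lintegral_mono fun x => h x a ha le_rfl


/-- The projection function of `f` on the hyperplane `θ⊥`. -/
def prj {n : ℕ} (f : Eucl n → ℝ) (H : Submodule ℝ (Eucl n)) (y : H) : ℝ :=
  ⨆ z : Hᗮ, f ((y : Eucl n) + (z : Eucl n))

lemma prj_bdd {n : ℕ} {f : Eucl n → ℝ} (hf : MemQ0 f) (H : Submodule ℝ (Eucl n)) (y : H) :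
    BddAbove (Set.range fun z : Hᗮ => f ((y : Eucl n) + (z : Eucl n))) := by
  refine ⟨supNorm f, ?_⟩
  rintro _ ⟨z, rfl⟩
  exact le_supNorm hf _

lemma prj_nonneg {n : ℕ} {f : Eucl n → ℝ} (hf : MemQ0 f) (H : Submodule ℝ (Eucl n)) (y : H) :
    0 ≤ prj f H y := Real.iSup_nonneg fun _ => hf.1 _

lemma ofReal_prj {n : ℕ} {f : Eucl n → ℝ} (hf : MemQ0 f) (H : Submodule ℝ (Eucl n)) (y : H) :
    ENNReal.ofReal (prj f H y) = ⨆ z : Hᗮ, ENNReal.ofReal (f ((y : Eucl n) + (z : Eucl n))) := by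
  exact Monotone.map_ciSup_of_continuousAt ENNReal.continuous_ofReal.continuousAt
    (fun a b h => ENNReal.ofReal_le_ofReal h) (prj_bdd hf H y)

lemma prj_logconc_bound {n : ℕ} {f : Eucl n → ℝ} (hf : MemQ0 f) (y0 v : Eucl n) (m s : ℝ)
    (hs : 0 < s) (hm : 0 < m) (h1 : m ≤ f y0) (h2 : m ≤ f (y0 + v)) (τ : ℝ) (hτ0 : 0 ≤ τ)
    (hτ : τ ≤ s) (y : Eucl n) :
    f (y - τ • v) ≤ (supNorm f / m) ^ (s / (1 + s)) *
      f ((1 + s)⁻¹ • y + (s / (1 + s)) • y0) := by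
  set M := supNorm f
  have hM : 0 < M := supNorm_pos hf
  set a := f (y - τ • v)
  have ha0 : 0 ≤ a := hf.1 _
  have haM : a ≤ M := le_supNorm hf _
  rcases ha0.eq_or_lt with h | ha
  · rw [← h]; have := hf.1 ((1 + s)⁻¹ • y + (s / (1 + s)) • y0); positivity
  set u := (τ / s) • (y0 + v) + ((s - τ) / s) • y0 with hu
  have hmu : m ≤ f u := quasi hf.1 hf.2.1 _ _ _ _ m (by positivity)
    (div_nonneg (by linarith) hs.le) (by field_simp; ring) hm.le h2 h1
  have hlc := hf.2.1 (y - τ • v) u ((1 + s)⁻¹) (by positivity)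
    (inv_lt_one_of_one_lt₀ (by linarith))
  have e1 : 1 - (1 + s)⁻¹ = s / (1 + s) := by field_simp; ring
  have e2 : (1 + s)⁻¹ • (y - τ • v) + (1 - (1 + s)⁻¹) • u
      = (1 + s)⁻¹ • y + (s / (1 + s)) • y0 := by
    rw [e1, hu]
    match_scalars
    · field_simp
    · field_simp
      ring
    · field_simp
      ring
  rw [e2, e1] at hlc
  set q := s / (1 + s) with hq
  have hq0 : 0 < q := by positivity
  have e3 : (1 + s)⁻¹ = 1 - q := by rw [hq]; field_simp; ring
  have h3 : a ^ (1 - q) * m ^ q ≤ f ((1 + s)⁻¹ • y + q • y0) := by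
    refine le_trans ?_ hlc
    rw [e3]
    gcongr
  have h4 : a = (a / m) ^ q * (a ^ (1 - q) * m ^ q) := by
    rw [Real.div_rpow ha.le hm.le, Real.rpow_sub ha, Real.rpow_one]
    have := (Real.rpow_pos_of_pos ha q).ne'
    have := (Real.rpow_pos_of_pos hm q).ne'
    field_simp
  calc a = (a / m) ^ q * (a ^ (1 - q) * m ^ q) := h4
    _ ≤ (M / m) ^ q * f ((1 + s)⁻¹ • y + q • y0) := by
      gcongr

lemma lemmaA0 {n : ℕ} {f : Eucl n → ℝ} (hf : MemQ0 f) (θ : Eucl n) (hθ : ‖θ‖ = 1)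
    (r : ℝ) (hr : 0 ≤ r) (y0 : Eucl n) (m s : ℝ)
    (hs : 0 < s) (hm : 0 < m) (h1 : m ≤ f y0) (h2 : m ≤ f (y0 + r • θ)) :
    ENNReal.ofReal (∫ x, f x) + ENNReal.ofReal (s * r) *
      ∫⁻ y, ENNReal.ofReal (prj f (Submodule.span ℝ {θ})ᗮ y) ≤
      ENNReal.ofReal (Real.exp (s * (n + Real.log (supNorm f / m))) * ∫ x, f x) := by
  have hfm := meas_of_mem hf
  set M := supNorm f
  have hM : 0 < M := supNorm_pos hf
  set C := (M / m) ^ (s / (1 + s)) with hC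
  have hC0 : 0 ≤ C := by positivity
  set G : Eucl n → ENNReal := fun y =>
    ENNReal.ofReal (C * f ((1 + s)⁻¹ • y + (s / (1 + s)) • y0)) with hG
  have hGm : Measurable G := by fun_prop
  set H := (Submodule.span ℝ {θ})ᗮ with hH
  have hGint : ∫⁻ x, G x = ENNReal.ofReal (C * (1 + s) ^ n * ∫ x, f x) := by
    have h := lint_affine (fun x => ENNReal.ofReal (C * f x)) (1 + s)⁻¹ (by positivity)
      ((s / (1 + s)) • y0)
    rw [hG, h]
    simp_rw [ENNReal.ofReal_mul hC0]
    rw [lintegral_const_mul _ (by fun_prop),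
      ← ofReal_integral_eq_lintegral_ofReal hf.2.2.2.1 (Filter.Eventually.of_forall hf.1),
      ENNReal.ofReal_mul (by positivity), ENNReal.ofReal_mul (by positivity)]
    simp only [inv_pow, inv_inv]
    ring
  have hle : ENNReal.ofReal (∫ x, f x) + ENNReal.ofReal (s * r) *
      ∫⁻ y, ENNReal.ofReal (prj f H y) ≤ ∫⁻ x, G x := by
    rw [ofReal_integral_eq_lintegral_ofReal hf.2.2.2.1 (Filter.Eventually.of_forall hf.1),
      fubini_line θ hθ _ hGm, fubini_line θ hθ _ (by fun_prop : Measurable fun x => ENNReal.ofReal (f x)),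
      ← lintegral_const_mul' _ _ ENNReal.ofReal_ne_top, ← lintegral_add_left]
    · refine lintegral_mono fun y => ?_
      simp only
      rw [ofReal_prj hf, ENNReal.mul_iSup, ENNReal.add_iSup]
      refine iSup_le fun z => ?_
      obtain ⟨p, hp⟩ : ∃ p : ℝ, p • θ = z := by
        have h3 : Hᗮ = Submodule.span ℝ {θ} := Submodule.orthogonal_orthogonal _
        have h4 : (z : Eucl n) ∈ Submodule.span ℝ {θ} := h3 ▸ z.2
        exact Submodule.mem_span_singleton.1 h4
      rw [← hp]
      refine line_lemma (fun t => ENNReal.ofReal (f ((y : Eucl n) + t • θ))) _ (s * r)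
        (by positivity) ?_ p
      intro x τ hτ0 hτ
      refine ENNReal.ofReal_le_ofReal ?_
      rcases hr.eq_or_lt with h0 | hr
      · have ht : τ = 0 := by rw [← h0] at hτ; linarith
        have := prj_logconc_bound hf y0 (r • θ) m s hs hm h1 h2 0 le_rfl hs.le
          ((y : Eucl n) + x • θ)
        simpa [ht] using this
      · have := prj_logconc_bound hf y0 (r • θ) m s hs hm h1 h2 (τ / r) (by positivity)
          ((div_le_iff₀ hr).2 hτ) ((y : Eucl n) + x • θ)
        rw [smul_smul, div_mul_cancel₀ _ hr.ne', add_sub_assoc, ← sub_smul] at this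
        exact this
    · have : Measurable fun p : H × ℝ => ENNReal.ofReal (f ((p.1 : Eucl n) + p.2 • θ)) := by
        fun_prop
      exact this.lintegral_prod_right'
  refine hle.trans ?_
  rw [hGint]
  refine ENNReal.ofReal_le_ofReal ?_
  have hI := hf.2.2.2.2
  gcongr
  have hMm : 1 ≤ M / m := (one_le_div hm).2 (h1.trans (le_supNorm hf _))
  have b1 : C ≤ Real.exp (s * Real.log (M / m)) := by
    rw [hC, Real.rpow_def_of_pos (by positivity)]
    apply Real.exp_le_exp.2
    rw [mul_comm]
    have := Real.log_nonneg hMm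
    gcongr
    exact div_le_self hs.le (by linarith)
  have b2 : (1 + s) ^ n ≤ Real.exp (s * n) := by
    rw [mul_comm, Real.exp_nat_mul]
    gcongr
    linarith [Real.add_one_le_exp s]
  calc C * (1 + s) ^ n ≤ Real.exp (s * Real.log (M / m)) * Real.exp (s * n) := by gcongr
    _ = _ := by rw [← Real.exp_add]; congr 1; ring

lemma lemmaA {n : ℕ} {f : Eucl n → ℝ} (hf : MemQ0 f) (θ : Eucl n) (hθ : ‖θ‖ = 1)
    (r : ℝ) (hr : 0 < r) (y0 : Eucl n) (m : ℝ)
    (hm : 0 < m) (h1 : m ≤ f y0) (h2 : m ≤ f (y0 + r • θ)) :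
    (∫⁻ y, ENNReal.ofReal (prj f (Submodule.span ℝ {θ})ᗮ y)) ≠ ⊤ ∧
    r * (∫⁻ y, ENNReal.ofReal (prj f (Submodule.span ℝ {θ})ᗮ y)).toReal ≤
      (∫ x, f x) * (n + Real.log (supNorm f / m)) := by
  have key := fun s hs => lemmaA0 hf θ hθ r hr.le y0 m s hs hm h1 h2
  set X := ∫⁻ y, ENNReal.ofReal (prj f (Submodule.span ℝ {θ})ᗮ y)
  set κ := (n + Real.log (supNorm f / m))
  set I := ∫ x, f x
  have hI : 0 < I := hf.2.2.2.2
  have hX : X ≠ ⊤ := by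
    intro h
    have := key 1 one_pos
    rw [h, ENNReal.mul_top (by simpa using hr)] at this
    simp at this
  refine ⟨hX, ?_⟩
  have key2 : ∀ s : ℝ, 0 < s → r * X.toReal ≤ I * ((Real.exp (s * κ) - 1) / s) := by
    intro s hs
    have h := key s hs
    rw [← ENNReal.ofReal_toReal hX, ← ENNReal.ofReal_mul (by positivity),
      ← ENNReal.ofReal_add hI.le (by positivity), ENNReal.ofReal_le_ofReal_iff (by positivity)] at h
    rw [← mul_div_assoc, le_div_iff₀ hs]
    nlinarith
  have hd : HasDerivAt (fun s : ℝ => Real.exp (s * κ)) κ 0 := by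
    have := ((hasDerivAt_id (0:ℝ)).mul_const κ).exp
    simpa using this
  have ht := hd.tendsto_slope_zero_right
  have ht2 : Filter.Tendsto (fun s : ℝ => I * ((Real.exp (s * κ) - 1) / s))
      (nhdsWithin 0 (Set.Ioi 0)) (nhds (I * κ)) := by
    refine Filter.Tendsto.const_mul I ?_
    refine ht.congr fun s => ?_
    simp [div_eq_inv_mul]
  refine ge_of_tendsto ht2 ?_
  filter_upwards [self_mem_nhdsWithin] with s hs
  exact key2 s hs


lemma prj_convex {n : ℕ} {f : Eucl n → ℝ} (hf : MemQ0 f) (H : Submodule ℝ (Eucl n)) (t : ℝ)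
    (ht : 0 ≤ t) : Convex ℝ {y : H | t < prj f H y} := by
  intro y1 h1 y2 h2 a b ha hb hab
  obtain ⟨z1, hz1⟩ := exists_lt_of_lt_ciSup (show t < iSup _ from h1)
  obtain ⟨z2, hz2⟩ := exists_lt_of_lt_ciSup (show t < iSup _ from h2)
  set m := min (f ((y1 : Eucl n) + z1)) (f ((y2 : Eucl n) + z2)) with hm
  have hm0 : t < m := lt_min hz1 hz2
  have h := quasi hf.1 hf.2.1 _ _ a b m ha hb hab (ht.trans hm0.le) (min_le_left _ _) (min_le_right _ _)
  refine lt_of_lt_of_le (hm0.trans_le h) ?_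
  have := le_ciSup (prj_bdd hf H (a • y1 + b • y2)) (a • z1 + b • z2)
  refine le_trans (le_of_eq ?_) this
  congr 1
  simp only [Submodule.coe_add, Submodule.coe_smul]
  module

lemma prj_aem {n : ℕ} {f : Eucl n → ℝ} (hf : MemQ0 f) (H : Submodule ℝ (Eucl n)) :
    AEMeasurable (prj f H) := by
  apply NullMeasurable.aemeasurable
  have : @Measurable (NullMeasurableSpace H volume) ℝ _ _ (prj f H) := by
    apply measurable_of_Ioi
    intro t
    change NullMeasurableSet {y : H | t < prj f H y} volume
    rcases lt_or_ge t 0 with h | h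
    · have : {y : H | t < prj f H y} = Set.univ := by
        ext y; simp [h.trans_le (prj_nonneg hf H y)]
      rw [this]; exact nullMeasurableSet_univ
    · exact (prj_convex hf H t h).nullMeasurableSet volume
  intro s hs
  exact this hs

lemma projL1_eq {n : ℕ} {f : Eucl n → ℝ} (hf : MemQ0 f) (H : Submodule ℝ (Eucl n)) :
    projL1 f H = (∫⁻ y, ENNReal.ofReal (prj f H y)).toReal :=
  integral_eq_lintegral_of_nonneg_ae (Filter.Eventually.of_forall (prj_nonneg hf H))
    (prj_aem hf H).aestronglyMeasurable

lemma prj_fin {n : ℕ} {f : Eucl n → ℝ} (hf : MemQ0 f) (θ : Eucl n) (hθ : ‖θ‖ = 1) :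
    (∫⁻ y, ENNReal.ofReal (prj f (Submodule.span ℝ {θ})ᗮ y)) ≠ ⊤ := by
  have hc : Convex ℝ {x | 0 < f x} := by
    intro y1 h1 y2 h2 a b ha hb hab
    have h := quasi hf.1 hf.2.1 y1 y2 a b (min (f y1) (f y2)) ha hb hab (lt_min h1 h2).le
      (min_le_left _ _) (min_le_right _ _)
    exact (lt_min h1 h2).trans_le h
  have hne : (interior {x | 0 < f x}).Nonempty := by
    by_contra hcon
    rw [Set.not_nonempty_iff_eq_empty] at hcon
    have h0 : volume {x | 0 < f x} = 0 := by
      refine measure_mono_null ?_ (hc.addHaar_frontier volume)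
      rw [frontier, hcon, Set.sdiff_empty]
      exact subset_closure
    have h1 : f =ᵐ[volume] 0 := by
      have : ∀ᵐ x, ¬ (0 < f x) := by
        rw [ae_iff]; simpa using h0
      filter_upwards [this] with x hx
      exact le_antisymm (not_lt.1 hx) (hf.1 x)
    have := hf.2.2.2.2
    rw [integral_congr_ae h1] at this
    simp at this
  obtain ⟨x0, hx0⟩ := hne
  obtain ⟨ε, hε, hb⟩ := Metric.isOpen_iff.1 isOpen_interior x0 hx0
  have h1 : 0 < f x0 := (interior_subset hx0 : x0 ∈ {x | 0 < f x})
  have h2 : 0 < f (x0 + (ε / 2) • θ) := by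
    have : x0 + (ε / 2) • θ ∈ Metric.ball x0 ε := by
      simp [norm_smul, hθ, abs_of_pos hε]
      linarith
    exact (interior_subset (hb this) : x0 + (ε / 2) • θ ∈ {x | 0 < f x})
  exact (lemmaA hf θ hθ (ε / 2) (by positivity) x0 _ (lt_min h1 h2) (min_le_left _ _)
    (min_le_right _ _)).1

lemma prj_majorant {n : ℕ} {f : Eucl n → ℝ} (hf : MemQ0 f) (θ : Eucl n) (hθ : ‖θ‖ = 1) :
    ∃ P : (Submodule.span ℝ {θ})ᗮ → ENNReal, Measurable P ∧
      (∀ (y : (Submodule.span ℝ {θ})ᗮ) (t : ℝ), ENNReal.ofReal (f ((y : Eucl n) + t • θ)) ≤ P y) ∧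
      ∫⁻ y, P y = ENNReal.ofReal (projL1 f (Submodule.span ℝ {θ})ᗮ) := by
  set H := (Submodule.span ℝ {θ})ᗮ with hH
  have ha : AEMeasurable (fun y => ENNReal.ofReal (prj f H y)) := (prj_aem hf H).ennreal_ofReal
  obtain ⟨s, hs, hsm, hs0⟩ := exists_measurable_superset_of_null (ae_iff.1 ha.ae_eq_mk)
  classical
  have hs0' : ∀ᵐ y, y ∉ s := by rw [ae_iff]; simpa using hs0
  refine ⟨s.piecewise (fun _ => ⊤) (ha.mk _), Measurable.piecewise hsm measurable_const
    ha.measurable_mk, ?_, ?_⟩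
  · intro y t
    by_cases hy : y ∈ s
    · simp [hy]
    · rw [Set.piecewise_eq_of_notMem _ _ _ hy]
      have : ENNReal.ofReal (prj f H y) = ha.mk _ y := by
        by_contra h; exact hy (hs h)
      rw [← this]
      apply ENNReal.ofReal_le_ofReal
      have h3 : Hᗮ = Submodule.span ℝ {θ} := Submodule.orthogonal_orthogonal _
      exact le_ciSup (prj_bdd hf H y) ⟨t • θ, h3 ▸ Submodule.mem_span_singleton.2 ⟨t, rfl⟩⟩
  · rw [projL1_eq hf, ENNReal.ofReal_toReal (prj_fin hf θ hθ)]
    apply lintegral_congr_ae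
    filter_upwards [ha.ae_eq_mk, hs0'] with y h1 h2
    rw [Set.piecewise_eq_of_notMem _ _ _ h2, ← h1]


lemma lint_split {k : ℕ} (i : Fin (k + 1)) (Φ : (Fin (k + 1) → ℝ) → ENNReal) (hΦ : Measurable Φ) :
    ∫⁻ c, Φ c = ∫⁻ x : Fin k → ℝ, ∫⁻ t : ℝ, Φ (i.insertNth t x) := by
  have h := (volume_preserving_piFinSuccAbove (fun _ => ℝ) i).symm
  rw [← h.lintegral_comp hΦ, Measure.volume_eq_prod, lintegral_prod_symm]
  · rfl
  · exact (hΦ.comp (MeasurableEquiv.measurable _)).aemeasurable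

lemma meas_cons {k : ℕ} : Measurable (fun p : ℝ × (Fin k → ℝ) => (Fin.cons p.1 p.2 : Fin (k+1) → ℝ)) := by
  refine measurable_pi_lambda _ fun j => ?_
  refine Fin.cases ?_ (fun j => ?_) j
  · simpa using measurable_fst
  · simp only [Fin.cons_succ]; exact (measurable_pi_apply j).comp measurable_snd

lemma meas_removeNth {k : ℕ} (i : Fin (k+1)) : Measurable (fun c : Fin (k+1) → ℝ => (i.removeNth c : Fin k → ℝ)) :=
  measurable_pi_lambda _ fun j => measurable_pi_apply _

lemma lw_step (m : ℕ) (Q : Fin (m + 2) → (Fin (m + 1) → ℝ) → ENNReal) (hQ : ∀ i, Measurable (Q i)) :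
    ∫⁻ c : Fin (m + 2) → ℝ, ∏ i, Q i (i.removeNth c) ^ (1 / ((m : ℝ) + 1)) ≤
    ∫⁻ x : Fin (m + 1) → ℝ, Q 0 x ^ (1 / ((m : ℝ) + 1)) *
      ∏ i : Fin (m + 1), (∫⁻ t, Q i.succ (Fin.cons t (i.removeNth x))) ^ (1 / ((m : ℝ) + 1)) := by
  rw [lint_split 0]
  swap
  · refine Finset.measurable_prod _ fun i _ => ?_
    exact ((hQ i).comp (meas_removeNth i)).pow_const _
  refine lintegral_mono fun x => ?_
  have hm : ∀ i : Fin (m + 1), Measurable fun t : ℝ => Q i.succ (Fin.cons t (i.removeNth x)) := fun i =>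
    (hQ _).comp (meas_cons.comp (measurable_id.prodMk measurable_const))
  calc ∫⁻ t, ∏ i, Q i (i.removeNth (Fin.insertNth 0 t x : Fin (m + 2) → ℝ)) ^ (1 / ((m : ℝ) + 1))
      = ∫⁻ t, Q 0 x ^ (1 / ((m : ℝ) + 1)) *
          ∏ i : Fin (m + 1), Q i.succ (Fin.cons t (i.removeNth x)) ^ (1 / ((m : ℝ) + 1)) := by
        refine lintegral_congr fun t => ?_
        rw [Fin.prod_univ_succ, Fin.removeNth_insertNth]
        congr 1
        refine Finset.prod_congr rfl fun i _ => ?_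
        congr 2
        rw [Fin.insertNth_zero']
        exact Fin.cons_comp_succ_succAbove t x i
    _ = Q 0 x ^ (1 / ((m : ℝ) + 1)) * ∫⁻ t, 
          ∏ i : Fin (m + 1), Q i.succ (Fin.cons t (i.removeNth x)) ^ (1 / ((m : ℝ) + 1)) := by
        rw [lintegral_const_mul]
        exact Finset.measurable_prod _ fun i _ => (hm i).pow_const _
    _ ≤ _ := by
        gcongr
        refine ENNReal.lintegral_prod_norm_pow_le _ (fun i _ => (hm i).aemeasurable) ?_ ?_
        · simp; field_simp
        · intros; positivity

lemma loomis_whitney (m : ℕ) (Q : Fin (m + 2) → (Fin (m + 1) → ℝ) → ENNReal)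
    (hQ : ∀ i, Measurable (Q i)) :
    ∫⁻ c : Fin (m + 2) → ℝ, ∏ i, Q i (i.removeNth c) ^ (1 / ((m : ℝ) + 1)) ≤
      ∏ i, (∫⁻ z, Q i z) ^ (1 / ((m : ℝ) + 1)) := by
  induction m with
  | zero =>
    refine (lw_step 0 Q hQ).trans ?_
    simp only [Fin.prod_univ_succ, Nat.cast_zero, zero_add, div_one, ENNReal.rpow_one,
      Finset.univ_eq_empty, Finset.prod_empty, mul_one, Fin.succ_zero_eq_one, Finset.univ_unique,
      Finset.prod_singleton]
    have e : ∀ x : Fin 1 → ℝ, ∫⁻ t, Q 1 (Fin.cons t ((0 : Fin 1).removeNth x)) = ∫⁻ z, Q 1 z := by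
      intro x
      rw [lint_split 0 _ (hQ 1)]
      have : ∀ y : Fin 0 → ℝ, ∫⁻ t : ℝ, Q 1 (Fin.insertNth 0 t y)
          = ∫⁻ t, Q 1 (Fin.cons t ((0 : Fin 1).removeNth x)) := by
        intro y
        refine lintegral_congr fun t => ?_
        rw [Fin.insertNth_zero', Subsingleton.elim y ((0 : Fin 1).removeNth x)]
      simp_rw [this]
      rw [lintegral_const, Measure.volume_pi_eq_dirac (0 : Fin 0 → ℝ)]; simp
    simp only [Fin.default_eq_zero, Fin.succ_zero_eq_one, e]
    rw [lintegral_mul_const _ (hQ 0)]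
  | succ m ih =>
    refine (lw_step (m + 1) Q hQ).trans ?_
    push_cast
    set R : Fin (m + 2) → (Fin (m + 1) → ℝ) → ENNReal := fun i w => ∫⁻ t, Q i.succ (Fin.cons t w) with hR
    have hRm : ∀ i, Measurable (R i) := fun i =>
      Measurable.lintegral_prod_right' (f := fun p : (Fin (m + 1) → ℝ) × ℝ => Q i.succ (Fin.cons p.2 p.1))
        ((hQ _).comp (meas_cons.comp measurable_swap))
    have hRint : ∀ i, ∫⁻ w, R i w = ∫⁻ z, Q i.succ z := by
      intro i
      rw [lint_split 0 _ (hQ _)]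
      simp [hR]
    have hIH := ih R hRm
    simp_rw [hRint] at hIH
    set G : (Fin (m + 2) → ℝ) → ENNReal := fun x => ∏ i, R i (i.removeNth x) ^ (1 / ((m : ℝ) + 1)) with hG
    have hGm : Measurable G := Finset.measurable_prod _ fun i _ =>
      ((hRm i).comp (meas_removeNth i)).pow_const _
    have e1 : (1 / ((m : ℝ) + 1)) * (((m : ℝ) + 1) / ((m : ℝ) + 1 + 1)) = 1 / ((m : ℝ) + 1 + 1) := by
      field_simp
    have e2 : 0 ≤ (((m : ℝ) + 1) / ((m : ℝ) + 1 + 1)) := by positivity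
    have hpow : ∀ (a : Fin (m + 2) → ENNReal), ∏ i, a i ^ (1 / ((m : ℝ) + 1 + 1)) =
        (∏ i, a i ^ (1 / ((m : ℝ) + 1))) ^ (((m : ℝ) + 1) / ((m : ℝ) + 1 + 1)) := by
      intro a
      rw [← ENNReal.prod_rpow_of_nonneg e2]
      simp_rw [← ENNReal.rpow_mul, e1]
    have hH := ENNReal.lintegral_mul_prod_norm_pow_le (μ := (volume : Measure (Fin (m + 2) → ℝ)))
      ({0} : Finset (Fin 1)) (g := Q 0) (f := fun _ => G)
      (hQ 0).aemeasurable (fun _ _ => hGm.aemeasurable) (1 / ((m : ℝ) + 1 + 1))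
      (p := fun _ => ((m : ℝ) + 1) / ((m : ℝ) + 1 + 1)) (by simp; field_simp; ring) (by positivity)
      (fun _ _ => e2)
    simp only [Finset.prod_singleton] at hH
    rw [Fin.prod_univ_succ, hpow]
    calc _ = ∫⁻ x, Q 0 x ^ (1 / ((m : ℝ) + 1 + 1)) * G x ^ (((m : ℝ) + 1) / ((m : ℝ) + 1 + 1)) := by
          refine lintegral_congr fun x => ?_
          rw [hpow]
      _ ≤ _ := hH
      _ ≤ _ := by gcongr


/-- The matrix whose rows are the vectors `v i`. -/
def rowM {n : ℕ} (v : Fin n → Eucl n) : Matrix (Fin n) (Fin n) ℝ := Matrix.of fun i j => v i j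

/-- The linear map sending `c` to `∑ c i • v i`. -/
def TT {n : ℕ} (v : Fin n → Eucl n) (c : Fin n → ℝ) : Eucl n := ∑ i, c i • v i

lemma TT_eq {n : ℕ} (v : Fin n → Eucl n) (c : Fin n → ℝ) :
    TT v c = WithLp.toLp 2 (Matrix.toLin' (rowM v).transpose c) := by
  ext j
  simp [TT, rowM, Matrix.mulVec, dotProduct, mul_comm]

lemma TT_meas {n : ℕ} (v : Fin n → Eucl n) : Measurable (TT v) := by
  unfold TT; fun_prop

lemma lint_T {n : ℕ} (v : Fin n → Eucl n) (hv : (rowM v).det ≠ 0) (g : Eucl n → ENNReal)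
    (hg : Measurable g) :
    ∫⁻ c, g (TT v c) = ENNReal.ofReal (|(rowM v).det|⁻¹) * ∫⁻ x, g x := by
  rw [← (PiLp.volume_preserving_toLp (Fin n)).lintegral_comp hg]
  have hdet : (rowM v).transpose.det ≠ 0 := by rwa [Matrix.det_transpose]
  have h := Real.map_matrix_volume_pi_eq_smul_volume_pi hdet
  rw [Matrix.det_transpose, abs_inv] at h
  rw [← smul_eq_mul, ← lintegral_smul_measure, ← h, lintegral_map]
  · simp_rw [TT_eq]
  · exact hg.comp (PiLp.volume_preserving_toLp (Fin n)).measurable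
  · exact (LinearMap.continuous_of_finiteDimensional _).measurable

/-- The coordinate functional dual to `TT`. -/
def co {n : ℕ} (v : Fin n → Eucl n) (i : Fin n) (x : Eucl n) : ℝ := ∑ j, x j * (rowM v)⁻¹ j i

lemma co_meas {n : ℕ} (v : Fin n → Eucl n) (i : Fin n) : Measurable (co v i) := by
  unfold co; fun_prop

lemma co_add_smul {n : ℕ} (v : Fin n → Eucl n) (i : Fin n) (x y : Eucl n) (s : ℝ) :
    co v i (x + s • y) = co v i x + s * co v i y := by
  simp [co, add_mul, Finset.sum_add_distrib, Finset.mul_sum, mul_assoc]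

lemma co_self {n : ℕ} (v : Fin n → Eucl n) (hv : (rowM v).det ≠ 0) (i k : Fin n) :
    co v i (v k) = if k = i then 1 else 0 := by
  have h := Matrix.mul_nonsing_inv (rowM v) (isUnit_iff_ne_zero.2 hv)
  have := congrFun (congrFun h k) i
  rw [Matrix.mul_apply, Matrix.one_apply] at this
  simpa [co, rowM] using this

lemma co_TT {n : ℕ} (v : Fin n → Eucl n) (hv : (rowM v).det ≠ 0) (i : Fin n) (c : Fin n → ℝ) :
    co v i (TT v c) = c i := by
  have h : ∀ s : Finset (Fin n), co v i (∑ k ∈ s, c k • v k) = ∑ k ∈ s, c k * co v i (v k) := by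
    intro s
    induction s using Finset.induction with
    | empty => simp [co]
    | insert a s ha ih =>
      rw [Finset.sum_insert ha, Finset.sum_insert ha, add_comm, co_add_smul, ih, add_comm]
  rw [TT, h]
  simp [co_self v hv]

lemma lint_ind (a : ℝ) (r : ℝ) (hr : 0 < r) (C : ENNReal) :
    ∫⁻ s : ℝ, (Set.Ico (0:ℝ) 1).indicator (fun _ => C) (a + s * r⁻¹) = ENNReal.ofReal r * C := by
  have : ∀ s : ℝ, (Set.Ico (0:ℝ) 1).indicator (fun _ => C) (a + s * r⁻¹)
      = (Set.Ico (-(a * r)) (-(a * r) + r)).indicator (fun _ => C) s := by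
    intro s
    have : a + s * r⁻¹ ∈ Set.Ico (0:ℝ) 1 ↔ s ∈ Set.Ico (-(a * r)) (-(a * r) + r) := by
      have e : a + s * r⁻¹ = (a * r + s) / r := by field_simp
      rw [Set.mem_Ico, Set.mem_Ico, e, div_lt_one hr, le_div_iff₀ hr]
      constructor <;> rintro ⟨h1, h2⟩ <;> constructor <;> linarith
    by_cases h : a + s * r⁻¹ ∈ Set.Ico (0:ℝ) 1
    · rw [Set.indicator_of_mem h, Set.indicator_of_mem (this.1 h)]
    · rw [Set.indicator_of_notMem h, Set.indicator_of_notMem (fun h' => h (this.2 h'))]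
  simp_rw [this]
  rw [lintegral_indicator_const measurableSet_Ico, Real.volume_Ico, mul_comm]
  congr 2; ring

lemma TT_insert {m : ℕ} (v : Fin (m + 1) → Eucl (m + 1)) (i : Fin (m + 1)) (t : ℝ) (z : Fin m → ℝ) :
    TT v (i.insertNth t z) = TT v (i.insertNth 0 z) + t • v i := by
  simp [TT, Fin.sum_univ_succAbove _ i, add_comm]

lemma unit_of {n : ℕ} {w : Eucl n} (hw : w ≠ 0) : ‖(‖w‖⁻¹ • w)‖ = 1 := by
  rw [norm_smul, norm_inv, norm_norm, inv_mul_cancel₀ (norm_ne_zero_iff.2 hw)]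

lemma row_ne_zero {n : ℕ} (v : Fin n → Eucl n) (hv : (rowM v).det ≠ 0) (i : Fin n) : v i ≠ 0 := by
  intro h
  have := co_self v hv i i
  rw [h] at this
  simp [co] at this

/-- The hyperplane orthogonal to `w`. -/
abbrev hyp {n : ℕ} (w : Eucl n) : Submodule ℝ (Eucl n) := (Submodule.span ℝ {‖w‖⁻¹ • w})ᗮ

lemma exists_Q {m : ℕ} {f : Eucl (m + 1) → ℝ} (hf : MemQ0 f) (v : Fin (m + 1) → Eucl (m + 1))
    (hv : (rowM v).det ≠ 0) (i : Fin (m + 1)) :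
    ∃ Q : (Fin m → ℝ) → ENNReal, Measurable Q ∧
      (∀ c, ENNReal.ofReal (f (TT v c)) ≤ Q (i.removeNth c)) ∧
      ∫⁻ z, Q z = ENNReal.ofReal (|(rowM v).det|⁻¹ * (‖v i‖ * projL1 f (hyp (v i)))) := by
  have hvi := row_ne_zero v hv i
  have hr : 0 < ‖v i‖ := norm_pos_iff.2 hvi
  set θ := ‖v i‖⁻¹ • v i with hθd
  have hθ : ‖θ‖ = 1 := unit_of hvi
  have hvθ : v i = ‖v i‖ • θ := by rw [hθd, smul_smul, mul_inv_cancel₀ hr.ne', one_smul]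
  set H := (Submodule.span ℝ {θ})ᗮ with hH
  obtain ⟨P, hPm, hP, hPi⟩ : ∃ P : H → ENNReal, Measurable P ∧
      (∀ (y : H) (t : ℝ), ENNReal.ofReal (f ((y : Eucl (m + 1)) + t • θ)) ≤ P y) ∧
      ∫⁻ y, P y = ENNReal.ofReal (projL1 f H) := prj_majorant hf θ hθ
  set Φ : Eucl (m + 1) → ENNReal := fun x => P (H.orthogonalProjectionOnto x) with hΦ
  have hΦm : Measurable Φ := hPm.comp (H.orthogonalProjectionOnto).continuous.measurable
  have hθmem : θ ∈ Hᗮ := by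
    rw [hH, Submodule.orthogonal_orthogonal]; exact Submodule.mem_span_singleton_self θ
  have hθ0 : H.orthogonalProjectionOnto θ = 0 :=
    Submodule.orthogonalProjectionOnto_apply_of_mem_orthogonal hθmem
  have hinv : ∀ (x : Eucl (m + 1)) (s : ℝ), Φ (x + s • θ) = Φ x := by
    intro x s
    simp [hΦ, hθ0]
  have hinv' : ∀ (x : Eucl (m + 1)) (s : ℝ), Φ (x + s • v i) = Φ x := by
    intro x s
    rw [hvθ, smul_smul, hinv]
  have hfΦ : ∀ x, ENNReal.ofReal (f x) ≤ Φ x := by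
    intro x
    have h1 : x - (H.orthogonalProjectionOnto x : Eucl (m + 1)) ∈ Hᗮ :=
      Submodule.sub_starProjection_mem_orthogonal x
    have hHH : Hᗮ = Submodule.span ℝ {θ} := Submodule.orthogonal_orthogonal _
    obtain ⟨t, ht⟩ := Submodule.mem_span_singleton.1 (hHH.le h1)
    have := hP (H.orthogonalProjectionOnto x) t
    rw [ht] at this
    simpa using this
  have hTQ : ∀ t z, Φ (TT v (i.insertNth t z)) = Φ (TT v (i.insertNth 0 z)) := by
    intro t z; rw [TT_insert, hinv']
  have hQm : Measurable fun z : Fin m → ℝ => Φ (TT v (i.insertNth 0 z)) := by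
    refine hΦm.comp ((TT_meas v).comp ?_)
    refine measurable_pi_lambda _ fun j => ?_
    refine Fin.succAboveCases i ?_ (fun j => ?_) j
    · simp
    · simp only [Fin.insertNth_apply_succAbove]; exact measurable_pi_apply j
  refine ⟨fun z => Φ (TT v (i.insertNth 0 z)), hQm, ?_, ?_⟩
  · intro c
    refine (hfΦ _).trans (le_of_eq ?_)
    conv_lhs => rw [← Fin.insertNth_self_removeNth i c]
    exact hTQ _ _
  · set W : Eucl (m + 1) → ENNReal := fun x => (Set.Ico (0:ℝ) 1).indicator (fun _ => Φ x) (co v i x)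
      with hW
    have hWm : Measurable W := by
      have : W = ((co v i) ⁻¹' (Set.Ico (0:ℝ) 1)).indicator Φ := by
        ext x; simp [hW, Set.indicator]
      rw [this]
      exact hΦm.indicator (co_meas v i measurableSet_Ico)
    have h1 := lint_T v hv W hWm
    rw [lint_split i (fun c => W (TT v c)) (hWm.comp (TT_meas v))] at h1
    have h2 : ∀ z : Fin m → ℝ, ∫⁻ t : ℝ, W (TT v (i.insertNth t z)) = Φ (TT v (i.insertNth 0 z)) := by
      intro z
      have := lint_ind 0 1 one_pos (Φ (TT v (i.insertNth 0 z)))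
      simp only [inv_one, mul_one, zero_add, ENNReal.ofReal_one, one_mul] at this
      rw [← this]
      refine lintegral_congr fun t => ?_
      simp only [hW]
      rw [co_TT v hv, hTQ, Fin.insertNth_apply_same]
    simp_rw [h2] at h1
    rw [h1, fubini_line θ hθ W hWm]
    have h3 : ∀ y : H, ∫⁻ s : ℝ, W ((y : Eucl (m + 1)) + s • θ) = ENNReal.ofReal ‖v i‖ * P y := by
      intro y
      rw [← lint_ind (co v i y) ‖v i‖ hr]
      refine lintegral_congr fun s => ?_
      simp only [hW]
      have e : co v i θ = ‖v i‖⁻¹ := by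
        have h := co_add_smul v i 0 (v i) ‖v i‖⁻¹
        rw [co_self v hv, zero_add] at h
        rw [hθd, h]
        simp [co]
      rw [hinv, co_add_smul, e]
      simp [hΦ]
    simp_rw [h3]
    rw [lintegral_const_mul _ hPm, hPi, ← ENNReal.ofReal_mul hr.le,
      ← ENNReal.ofReal_mul (by positivity)]

lemma projL1_nonneg {n : ℕ} {f : Eucl n → ℝ} (hf : MemQ0 f) (H : Submodule ℝ (Eucl n)) :
    0 ≤ projL1 f H := integral_nonneg fun y => prj_nonneg hf H y

lemma f1_side {m : ℕ} {f : Eucl (m + 2) → ℝ} (hf : MemQ0 f) (v : Fin (m + 2) → Eucl (m + 2))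
    (hv : (rowM v).det ≠ 0) :
    supNorm f * (∫ x, f x) ^ (m + 1) ≤
      (((m : ℝ) + 2) / (m + 1)) ^ ((m + 2) * (m + 1)) *
        ((∏ i, ‖v i‖ * projL1 f (hyp (v i))) / |(rowM v).det|) := by
  choose Q hQm hQ hQi using exists_Q hf v hv
  set D := |(rowM v).det| with hD
  have hD0 : 0 < D := abs_pos.2 hv
  set h : Fin (m + 2) → ℝ := fun i => ‖v i‖ * projL1 f (hyp (v i)) with hh
  have hh0 : ∀ i, 0 ≤ h i := fun i => mul_nonneg (norm_nonneg _) (projL1_nonneg hf _)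
  have hfm := meas_of_mem hf
  set k : ℝ := (m : ℝ) + 1 with hk
  have hk0 : 0 < k := by positivity
  set p : ℝ := ((m : ℝ) + 2) / k with hp
  have hp0 : 0 < p := by positivity
  have lw := loomis_whitney m Q hQm
  have l1 : ∫⁻ c, ENNReal.ofReal (f (TT v c)) ^ p ≤ 
      ∫⁻ c : Fin (m + 2) → ℝ, ∏ i, Q i (i.removeNth c) ^ (1 / k) := by
    refine lintegral_mono fun c => ?_
    calc ENNReal.ofReal (f (TT v c)) ^ p
        = ∏ i : Fin (m + 2), ENNReal.ofReal (f (TT v c)) ^ (1 / k) := by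
          rw [Finset.prod_const, Finset.card_univ, Fintype.card_fin, ← ENNReal.rpow_natCast,
            ← ENNReal.rpow_mul]
          congr 1
          rw [hp]; push_cast; ring
      _ ≤ _ := Finset.prod_le_prod' fun i _ => ENNReal.rpow_le_rpow (hQ i c) (by positivity)
  have l2 := l1.trans lw
  simp_rw [hQi] at l2
  rw [lint_T v hv (fun x => ENNReal.ofReal (f x) ^ p) (by fun_prop)] at l2
  set X := ∫⁻ x, ENNReal.ofReal (f x) ^ p with hX
  have hPr0 : 0 ≤ ∏ i, D⁻¹ * h i := Finset.prod_nonneg fun i _ => mul_nonneg (by positivity) (hh0 i)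
  have l3 : ENNReal.ofReal D⁻¹ * X ≤ ENNReal.ofReal ((∏ i, D⁻¹ * h i) ^ (1 / k)) := by
    rw [← ENNReal.ofReal_rpow_of_nonneg hPr0 (by positivity),
      ENNReal.ofReal_prod_of_nonneg (fun i _ => mul_nonneg (by positivity) (hh0 i)),
      ← ENNReal.prod_rpow_of_nonneg (by positivity)]
    exact l2
  have l4 : X ≤ ENNReal.ofReal (D * (∏ i, D⁻¹ * h i) ^ (1 / k)) := by
    calc X = ENNReal.ofReal D * (ENNReal.ofReal D⁻¹ * X) := by
          rw [← mul_assoc, ← ENNReal.ofReal_mul hD0.le, mul_inv_cancel₀ hD0.ne']; simp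
      _ ≤ ENNReal.ofReal D * ENNReal.ofReal ((∏ i, D⁻¹ * h i) ^ (1 / k)) := by gcongr
      _ = _ := by rw [ENNReal.ofReal_mul hD0.le]
  have hI := hf.2.2.2.2
  set I := ∫ x, f x with hIdef
  suffices hmain : ∀ x0, f x0 * I ^ (m + 1) ≤ p ^ ((m + 2) * (m + 1)) * ((∏ i, h i) / D) by
    rw [supNorm, Real.iSup_mul_of_nonneg (by positivity)]
    exact ciSup_le hmain
  intro x0
  have hp1 : 1 < p := by rw [hp, one_lt_div hk0, hk]; linarith
  have hx0 := hf.1 x0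
  have b1 : ∀ x, ENNReal.ofReal (f x0 ^ (1 / k)) * ENNReal.ofReal (f x) ≤
      ENNReal.ofReal (f (p⁻¹ • x + (1 - p⁻¹) • x0)) ^ p := by
    intro x
    have hlc := hf.2.1 x x0 p⁻¹ (by positivity) (inv_lt_one_of_one_lt₀ hp1)
    rw [← ENNReal.ofReal_mul (by positivity), ENNReal.ofReal_rpow_of_nonneg (hf.1 _) hp0.le]
    apply ENNReal.ofReal_le_ofReal
    have h2 := Real.rpow_le_rpow (mul_nonneg (Real.rpow_nonneg (hf.1 x) _) (Real.rpow_nonneg hx0 _))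
      hlc hp0.le
    refine le_trans (le_of_eq ?_) h2
    rw [Real.mul_rpow (Real.rpow_nonneg (hf.1 x) _) (Real.rpow_nonneg hx0 _), ← Real.rpow_mul (hf.1 x),
      ← Real.rpow_mul hx0, inv_mul_cancel₀ hp0.ne', Real.rpow_one, mul_comm]
    congr 2
    rw [hp, hk]; field_simp; ring
  have b2 : ENNReal.ofReal (f x0 ^ (1 / k) * I) ≤ ENNReal.ofReal (p ^ (m + 2)) * X := by
    rw [ENNReal.ofReal_mul (by positivity), hIdef,
      ofReal_integral_eq_lintegral_ofReal hf.2.2.2.1 (Filter.Eventually.of_forall hf.1),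
      ← lintegral_const_mul _ (by fun_prop)]
    refine (lintegral_mono b1).trans ?_
    rw [lint_affine (fun x => ENNReal.ofReal (f x) ^ p) p⁻¹ (by positivity) ((1 - p⁻¹) • x0)]
    simp [hX]
  have b3 : f x0 ^ (1 / k) * I ≤ p ^ (m + 2) * (D * (∏ i, D⁻¹ * h i) ^ (1 / k)) := by
    rw [← ENNReal.ofReal_le_ofReal_iff (by positivity)]
    refine b2.trans ?_
    rw [ENNReal.ofReal_mul (by positivity)]
    gcongr
  have b4 := pow_le_pow_left₀ (by positivity) b3 (m + 1)
  have e : ∀ a : ℝ, 0 ≤ a → (a ^ (1 / k)) ^ (m + 1) = a := by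
    intro a ha
    rw [← Real.rpow_natCast, ← Real.rpow_mul ha]
    push_cast
    rw [← hk, one_div_mul_cancel hk0.ne', Real.rpow_one]
  rw [mul_pow, mul_pow, mul_pow, e _ hx0, e _ hPr0, ← pow_mul, Finset.prod_mul_distrib,
    Finset.prod_const, Finset.card_univ, Fintype.card_fin] at b4
  refine b4.trans (le_of_eq ?_)
  congr 1
  have e5 : D ^ (m + 1) * D⁻¹ ^ (m + 2) = D⁻¹ := by
    rw [pow_succ D⁻¹ (m + 1), ← mul_assoc, ← mul_pow, mul_inv_cancel₀ hD0.ne', one_pow, one_mul]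
  rw [← mul_assoc, e5, div_eq_inv_mul]


/-- Second moment matrix. -/
def secM {n : ℕ} (μ : Measure (Eucl n)) : Matrix (Fin n) (Fin n) ℝ :=
  Matrix.of fun j k => ∫ x, x j * x k ∂μ

lemma posdef_factor {n : ℕ} (A : Matrix (Fin n) (Fin n) ℝ) (hA : A.PosSemidef) :
    ∃ B : Matrix (Fin n) (Fin n) ℝ, A = B.transpose * B := by
  open scoped MatrixOrder in
  obtain ⟨a, ha⟩ := CStarAlgebra.nonneg_iff_eq_star_mul_self.mp hA.nonneg
  exact ⟨a, by rw [ha, Matrix.star_eq_conjTranspose, Matrix.conjTranspose_eq_transpose_of_trivial]⟩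

lemma andreief {n : ℕ} (μ : Measure (Eucl n)) [IsProbabilityMeasure μ]
    (hmom : ∀ j k, Integrable (fun x : Eucl n => x j * x k) μ) :
    Integrable (fun v : Fin n → Eucl n => (rowM v).det ^ 2) (Measure.pi fun _ => μ) ∧
    ∫ v, (rowM v).det ^ 2 ∂(Measure.pi fun _ : Fin n => μ) = n.factorial * (secM μ).det := by
  have hexp : ∀ v : Fin n → Eucl n, (rowM v).det ^ 2 = ∑ σ : Equiv.Perm (Fin n), ∑ τ : Equiv.Perm (Fin n),
      ((Equiv.Perm.sign σ : ℝ) * (Equiv.Perm.sign τ : ℝ)) * ∏ i, (v i (σ i) * v i (τ i)) := by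
    intro v
    rw [sq, ← Matrix.det_transpose, Matrix.det_apply', Finset.sum_mul_sum]
    refine Finset.sum_congr rfl fun σ _ => Finset.sum_congr rfl fun τ _ => ?_
    simp only [Matrix.transpose_apply, rowM, Matrix.of_apply, Finset.prod_mul_distrib]
    ring
  have hI : ∀ σ τ : Equiv.Perm (Fin n), Integrable (fun v : Fin n → Eucl n =>
      ((Equiv.Perm.sign σ : ℝ) * (Equiv.Perm.sign τ : ℝ)) * ∏ i, (v i (σ i) * v i (τ i)))
      (Measure.pi fun _ => μ) := fun σ τ =>
    (Integrable.fintype_prod (f := fun i (x : Eucl n) => x (σ i) * x (τ i))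
      (fun i => hmom _ _)).const_mul _
  simp_rw [hexp]
  constructor
  · exact integrable_finsetSum _ fun σ _ => integrable_finsetSum _ fun τ _ => hI σ τ
  · rw [integral_finsetSum _ fun σ _ => integrable_finsetSum _ fun τ _ => hI σ τ]
    have : ∀ σ : Equiv.Perm (Fin n), ∫ v, ∑ τ : Equiv.Perm (Fin n),
      ((Equiv.Perm.sign σ : ℝ) * (Equiv.Perm.sign τ : ℝ)) * ∏ i, (v i (σ i) * v i (τ i))
        ∂(Measure.pi fun _ : Fin n => μ) = (secM μ).det := by
      intro σ
      rw [integral_finsetSum _ fun τ _ => hI σ τ]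
      have h1 : ∀ τ : Equiv.Perm (Fin n), ∫ v, 
        ((Equiv.Perm.sign σ : ℝ) * (Equiv.Perm.sign τ : ℝ)) * ∏ i, (v i (σ i) * v i (τ i))
        ∂(Measure.pi fun _ : Fin n => μ) = (Equiv.Perm.sign σ : ℝ) *
          ((Equiv.Perm.sign τ : ℝ) * ∏ i, ((secM μ).submatrix σ id).transpose (τ i) i) := by
        intro τ
        rw [integral_const_mul, integral_fintype_prod_eq_prod (fun i (x : Eucl n) => x (σ i) * x (τ i)),
          mul_assoc]
        rfl
      simp_rw [h1]
      rw [← Finset.mul_sum, ← Matrix.det_apply', Matrix.det_transpose, Matrix.det_permute, ← mul_assoc]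
      have : ((Equiv.Perm.sign σ : ℤ) : ℝ) * ((Equiv.Perm.sign σ : ℤ) : ℝ) = 1 := by
        rw [← Int.cast_mul, ← Units.val_mul, Int.units_mul_self]; simp
      rw [this, one_mul]
    simp_rw [this]
    simp [Fintype.card_perm]

lemma gauss_lint (n : ℕ) : ∫⁻ c : Fin n → ℝ, ENNReal.ofReal (Real.exp (-(1/2) * ∑ i, c i ^ 2)) =
    ENNReal.ofReal ((2 * Real.pi) ^ ((n : ℝ) / 2)) := by
  have h := GaussianFourier.integral_rexp_neg_mul_sq_norm (V := Eucl n) (b := 1/2) (by norm_num)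
  have hm : Measurable fun x : Eucl n => ENNReal.ofReal (Real.exp (-(1/2) * ‖x‖ ^ 2)) := by fun_prop
  have h2 := (PiLp.volume_preserving_toLp (Fin n)).lintegral_comp hm
  simp only [EuclideanSpace.norm_sq_eq, Real.norm_eq_abs, sq_abs] at h2
  rw [h2]
  have hmom : Integrable fun x : Eucl n => Real.exp (-(1/2) * ‖x‖ ^ 2) := by
    by_contra hc
    rw [integral_undef hc] at h
    have : 0 < (Real.pi / (1/2)) ^ ((Module.finrank ℝ (Eucl n) : ℝ) / 2) := by positivity
    linarith
  have h3 := ofReal_integral_eq_lintegral_ofReal hmom (Filter.Eventually.of_forall fun x => (Real.exp_pos _).le)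
  simp only [EuclideanSpace.norm_sq_eq, Real.norm_eq_abs, sq_abs] at h3 h
  rw [← h3, h, finrank_euclideanSpace_fin]
  congr 2
  ring


lemma quad_int {n : ℕ} (μ : Measure (Eucl n))
    (hmom : ∀ j k, Integrable (fun x : Eucl n => x j * x k) μ) (a : Fin n → ℝ) :
    Integrable (fun x : Eucl n => (∑ j, x j * a j) ^ 2) μ ∧
    ∫ x, (∑ j, x j * a j) ^ 2 ∂μ = ∑ j, ∑ k, a j * secM μ j k * a k := by
  have e : ∀ x : Eucl n, (∑ j, x j * a j) ^ 2 = ∑ j, ∑ k, (a j * a k) * (x j * x k) := by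
    intro x
    rw [sq, Finset.sum_mul_sum]
    refine Finset.sum_congr rfl fun j _ => Finset.sum_congr rfl fun k _ => ?_
    ring
  simp_rw [e]
  have h1 : ∀ j k, Integrable (fun x : Eucl n => (a j * a k) * (x j * x k)) μ := fun j k =>
    (hmom j k).const_mul _
  constructor
  · exact integrable_finsetSum _ fun j _ => integrable_finsetSum _ fun k _ => h1 j k
  · rw [integral_finsetSum _ fun j _ => integrable_finsetSum _ fun k _ => h1 j k]
    refine Finset.sum_congr rfl fun j _ => ?_
    rw [integral_finsetSum _ fun k _ => h1 j k]
    refine Finset.sum_congr rfl fun k _ => ?_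
    rw [integral_const_mul]
    simp only [secM, Matrix.of_apply]
    ring

lemma sec_posdef {n : ℕ} (μ : Measure (Eucl n)) [IsProbabilityMeasure μ] (hac : μ ≪ volume)
    (hmom : ∀ j k, Integrable (fun x : Eucl n => x j * x k) μ) : (secM μ).PosDef := by
  refine Matrix.PosDef.of_dotProduct_mulVec_pos ?_ ?_
  · ext j k
    simp [secM, mul_comm]
  · intro a ha
    have h := quad_int μ hmom a
    have e : star a ⬝ᵥ (secM μ).mulVec a = ∑ j, ∑ k, a j * secM μ j k * a k := by
      simp [dotProduct, Matrix.mulVec, Finset.mul_sum, mul_assoc]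
    rw [e, ← h.2, integral_pos_iff_support_of_nonneg (fun x => sq_nonneg _) h.1]
    rw [pos_iff_ne_zero]
    intro h0
    let S : Submodule ℝ (Eucl n) := (Submodule.span ℝ {(WithLp.toLp 2 a : Eucl n)})ᗮ
    have hS : (volume : Measure (Eucl n)) S = 0 := by
      apply Measure.addHaar_submodule
      intro hT
      have : (WithLp.toLp 2 a : Eucl n) ∈ S := hT ▸ Submodule.mem_top
      rw [Submodule.mem_orthogonal_singleton_iff_inner_right] at this
      apply ha
      have h2 := inner_self_eq_zero.1 this
      ext i
      exact congrArg (fun w : Eucl n => w i) h2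
    have h1 : μ Set.univ = 0 := by
      refine measure_mono_null ?_ (measure_union_null h0 (hac hS))
      intro x _
      by_cases hx : ∑ j, x j * a j = 0
      · right
        change x ∈ S
        rw [Submodule.mem_orthogonal_singleton_iff_inner_right]
        simpa [PiLp.inner_apply] using hx
      · left
        simpa [Function.mem_support] using hx
    simp at h1

lemma sec_lower {n : ℕ} (K : Set (Eucl n)) (hKm : MeasurableSet K) (hKt : volume K ≠ ⊤)
    (hK0 : volume K ≠ 0) (μ : Measure (Eucl n)) [IsProbabilityMeasure μ]
    (hμ : μ = (volume K)⁻¹ • volume.restrict K)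
    (hmom : ∀ j k, Integrable (fun x : Eucl n => x j * x k) μ) :
    (volume K).toReal ^ 2 ≤ (2 * Real.pi * Real.exp 1) ^ n * (secM μ).det := by
  have hac : μ ≪ volume := by
    rw [hμ]; exact (Measure.smul_absolutelyContinuous).trans Measure.absolutelyContinuous_restrict
  have hpd := sec_posdef μ hac hmom
  obtain ⟨B, hB⟩ := posdef_factor _ hpd.posSemidef
  have hdet : (secM μ).det = B.det ^ 2 := by rw [hB, Matrix.det_mul, Matrix.det_transpose, sq]
  have hB0 : B.det ≠ 0 := by
    intro h; have := hpd.det_pos; rw [hdet, h] at this; simp at this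
  set v : Fin n → Eucl n := fun i => WithLp.toLp 2 (B i) with hv
  have hvB : rowM v = B := by ext i j; simp [rowM, hv]
  have hvd : (rowM v).det ≠ 0 := by rwa [hvB]
  set q : Eucl n → ℝ := fun x => ∑ i, co v i x ^ 2 with hq
  have hqi : ∀ i, Integrable (fun x => co v i x ^ 2) μ ∧ ∫ x, co v i x ^ 2 ∂μ = 1 := by
    intro i
    have h := quad_int μ hmom (fun j => (rowM v)⁻¹ j i)
    refine ⟨h.1, h.2.trans ?_⟩
    have h1 : (B⁻¹.transpose * secM μ * B⁻¹) = 1 := by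
      rw [hB, ← Matrix.mul_assoc, ← Matrix.transpose_mul, Matrix.mul_nonsing_inv _ (isUnit_iff_ne_zero.2 hB0),
        Matrix.transpose_one, one_mul, Matrix.mul_nonsing_inv _ (isUnit_iff_ne_zero.2 hB0)]
    have h2 := congrFun (congrFun h1 i) i
    rw [Matrix.one_apply_eq, Matrix.mul_apply] at h2
    rw [← h2, hvB, Finset.sum_comm]
    refine Finset.sum_congr rfl fun k _ => ?_
    rw [Matrix.mul_apply, Finset.sum_mul]
    rfl
  have hqint : Integrable q μ := integrable_finsetSum _ fun i _ => (hqi i).1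
  have hqE : ∫ x, q x ∂μ = n := by
    rw [hq, integral_finsetSum _ fun i _ => (hqi i).1]
    simp_rw [fun i => (hqi i).2]
    simp
  have hqm : Measurable q := Finset.measurable_sum _ fun i _ => (co_meas v i).pow_const 2
  set E : Eucl n → ℝ := fun x => Real.exp (-(1/2) * q x) with hE
  have hEm : Measurable E := by fun_prop
  have hEint : Integrable E μ := by
    refine Integrable.of_bound hEm.aestronglyMeasurable 1 (Filter.Eventually.of_forall fun x => ?_)
    rw [Real.norm_eq_abs, abs_of_pos (Real.exp_pos _), Real.exp_le_one_iff]
    have : 0 ≤ q x := Finset.sum_nonneg fun i _ => sq_nonneg _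
    linarith
  have low : Real.exp (-(n : ℝ) / 2) ≤ ∫ x, E x ∂μ := by
    have h1 : ∫ x, Real.exp (-(n : ℝ) / 2) * (1 + n / 2 - 1 / 2 * q x) ∂μ = Real.exp (-(n : ℝ) / 2) := by
      rw [integral_const_mul, integral_sub (integrable_const _) (hqint.const_mul _), integral_const_mul, hqE]
      simp
      ring
    rw [← h1]
    refine integral_mono (((integrable_const _).sub (hqint.const_mul _)).const_mul _) hEint fun x => ?_
    simp only [hE]
    have h2 := Real.add_one_le_exp ((n : ℝ) / 2 - 1 / 2 * q x)
    calc Real.exp (-(n : ℝ) / 2) * (1 + n / 2 - 1 / 2 * q x)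
        ≤ Real.exp (-(n : ℝ) / 2) * Real.exp ((n : ℝ) / 2 - 1 / 2 * q x) := by
          gcongr; linarith
      _ = _ := by rw [← Real.exp_add]; congr 1; ring
  have hD0 : 0 < |B.det| := abs_pos.2 hB0
  have upE : ∫⁻ x, ENNReal.ofReal (E x) = ENNReal.ofReal (|B.det| * (2 * Real.pi) ^ ((n : ℝ) / 2)) := by
    have h := lint_T v hvd (fun x => ENNReal.ofReal (E x)) (by fun_prop)
    simp only [hE, hq, co_TT v hvd] at h
    rw [gauss_lint, hvB] at h
    rw [ENNReal.ofReal_mul hD0.le, h, ← mul_assoc, ← ENNReal.ofReal_mul hD0.le, mul_inv_cancel₀ hD0.ne']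
    simp [hE, hq]
  have V0 : 0 < (volume K).toReal := ENNReal.toReal_pos hK0 hKt
  have up : ∫ x, E x ∂μ ≤ (volume K).toReal⁻¹ * (|B.det| * (2 * Real.pi) ^ ((n : ℝ) / 2)) := by
    rw [← ENNReal.ofReal_le_ofReal_iff (by positivity), ofReal_integral_eq_lintegral_ofReal hEint
      (Filter.Eventually.of_forall fun x => (Real.exp_pos _).le), hμ, lintegral_smul_measure,
      ENNReal.ofReal_mul (by positivity), ENNReal.ofReal_inv_of_pos V0, ENNReal.ofReal_toReal hKt, ← upE,
      smul_eq_mul]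
    gcongr
    exact Measure.restrict_le_self
  have h3 := low.trans up
  rw [inv_mul_eq_div, le_div_iff₀ V0] at h3
  have h4 : (volume K).toReal ≤ Real.exp ((n : ℝ) / 2) * (|B.det| * (2 * Real.pi) ^ ((n : ℝ) / 2)) := by
    calc (volume K).toReal = Real.exp ((n : ℝ) / 2) * (Real.exp (-(n : ℝ) / 2) * (volume K).toReal) := by
          rw [← mul_assoc, ← Real.exp_add]; ring_nf; simp
      _ ≤ _ := by gcongr
  have h5 := pow_le_pow_left₀ V0.le h4 2
  refine h5.trans (le_of_eq ?_)
  have e1 : Real.exp ((n : ℝ) / 2) ^ 2 = Real.exp 1 ^ n := by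
    rw [← Real.exp_nat_mul, ← Real.exp_nat_mul]; congr 1; push_cast; ring
  have e2 : ((2 * Real.pi) ^ ((n : ℝ) / 2)) ^ 2 = (2 * Real.pi) ^ n := by
    rw [← Real.rpow_natCast, ← Real.rpow_mul (by positivity), ← Real.rpow_natCast]
    congr 1; push_cast; ring
  rw [mul_pow, mul_pow, e1, e2, sq_abs, hdet, mul_pow]
  ring

lemma exists_simplex {n : ℕ} (K : Set (Eucl n)) (hKm : MeasurableSet K) (hKb : Bornology.IsBounded K)
    (hK0 : volume K ≠ 0) : ∃ v : Fin n → Eucl n, (∀ i, v i ∈ K) ∧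
      n.factorial * (volume K).toReal ^ 2 ≤ (2 * Real.pi * Real.exp 1) ^ n * (rowM v).det ^ 2 := by
  have hKt : volume K ≠ ⊤ := hKb.measure_lt_top.ne
  set μ : Measure (Eucl n) := (volume K)⁻¹ • volume.restrict K with hμ
  haveI : IsProbabilityMeasure μ := ⟨by
    rw [hμ, Measure.smul_apply, Measure.restrict_apply_univ, smul_eq_mul, ENNReal.inv_mul_cancel hK0 hKt]⟩
  have hae : ∀ᵐ x ∂μ, x ∈ K := by
    have : ∀ᵐ x ∂(volume.restrict K), x ∈ K := ae_restrict_mem hKm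
    exact Measure.ae_smul_measure this _
  obtain ⟨R, hR⟩ := hKb.exists_norm_le
  have hmom : ∀ j k, Integrable (fun x : Eucl n => x j * x k) μ := by
    intro j k
    refine Integrable.of_bound (by fun_prop) (R * R) ?_
    filter_upwards [hae] with x hx
    rw [norm_mul]
    have h1 := (PiLp.norm_apply_le x j).trans (hR x hx)
    have h2 := (PiLp.norm_apply_le x k).trans (hR x hx)
    have := norm_nonneg (x k)
    have := norm_nonneg (x j)
    gcongr
    linarith
  have hlow := sec_lower K hKm hKt hK0 μ hμ hmom
  obtain ⟨hi, hand⟩ := andreief μ hmom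
  have hae2 : ∀ᵐ v ∂(Measure.pi fun _ : Fin n => μ), ∀ i, v i ∈ K := by
    rw [ae_all_iff]
    intro i
    exact Measure.tendsto_eval_ae_ae.eventually hae
  obtain ⟨v, hv, hle⟩ := exists_notMem_null_integral_le hi (ae_iff.1 hae2)
  refine ⟨v, by simpa using hv, ?_⟩
  rw [hand] at hle
  calc (n.factorial : ℝ) * (volume K).toReal ^ 2
      ≤ n.factorial * ((2 * Real.pi * Real.exp 1) ^ n * (secM μ).det) := by gcongr
    _ = (2 * Real.pi * Real.exp 1) ^ n * (n.factorial * (secM μ).det) := by ring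
    _ ≤ _ := by gcongr


lemma gamma_lint (n : ℕ) : ∫⁻ u in Set.Ioi (0:ℝ), ENNReal.ofReal (Real.exp (-u) * u ^ n)
    = ENNReal.ofReal n.factorial := by
  have hs : (0:ℝ) < n + 1 := by positivity
  have h1 := Real.Gamma_eq_integral hs
  have h2 := Real.GammaIntegral_convergent hs
  simp only [add_sub_cancel_right, Real.rpow_natCast] at h1 h2
  rw [← Real.Gamma_nat_eq_factorial, h1, ofReal_integral_eq_lintegral_ofReal h2]
  filter_upwards [ae_restrict_mem measurableSet_Ioi] with u hu
  have : (0:ℝ) < u := hu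
  simp only [Pi.zero_apply]
  positivity

lemma gamma_tail (n : ℕ) (hn : 0 < n) : ∫⁻ t in Set.Ici (0:ℝ), ENNReal.ofReal (Real.exp (-t) * (n + t) ^ n)
    < ENNReal.ofReal (Real.exp n * n.factorial) := by
  set g : ℝ → ENNReal := fun u => ENNReal.ofReal (Real.exp (-u) * u ^ n) with hg
  have hgm : Measurable g := by fun_prop
  have h1 : ∫⁻ t in Set.Ici (0:ℝ), ENNReal.ofReal (Real.exp (-t) * (n + t) ^ n)
      = ENNReal.ofReal (Real.exp n) * ∫⁻ u in Set.Ici (n:ℝ), g u := by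
    rw [← lintegral_const_mul _ hgm, ← lintegral_indicator measurableSet_Ici, ← lintegral_indicator measurableSet_Ici]
    conv_rhs => rw [← lintegral_add_right_eq_self _ (n : ℝ)]
    refine lintegral_congr fun t => ?_
    simp only [Set.indicator, Set.mem_Ici, le_add_iff_nonneg_left]
    split_ifs with h
    · rw [hg, ← ENNReal.ofReal_mul (by positivity), ← mul_assoc, ← Real.exp_add]
      congr 3
      · congr 1; ring
      · ring
    · rfl
  have h2 : ∫⁻ u in Set.Ioi (0:ℝ), g u = (∫⁻ u in Set.Ioo (0:ℝ) n, g u) + ∫⁻ u in Set.Ici (n:ℝ), g u := by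
    rw [← lintegral_union measurableSet_Ici, Set.Ioo_union_Ici_eq_Ioi (by exact_mod_cast hn)]
    rw [Set.disjoint_left]; intro x hx hx'; exact absurd hx.2 (not_lt.2 hx')
  have h3 : 0 < ∫⁻ u in Set.Ioo (0:ℝ) n, g u := by
    rw [setLIntegral_pos_iff hgm]
    have : Function.support g ∩ Set.Ioo (0:ℝ) n = Set.Ioo (0:ℝ) n := by
      rw [Set.inter_eq_right]
      intro u hu
      have : 0 < u := hu.1
      simp only [hg, Function.mem_support, ne_eq, ENNReal.ofReal_eq_zero, not_le]
      positivity
    rw [this]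
    simpa using hn
  rw [gamma_lint] at h2
  have h4 : ∫⁻ u in Set.Ici (n:ℝ), g u < ENNReal.ofReal n.factorial := by
    have hfin : ∫⁻ u in Set.Ici (n:ℝ), g u ≠ ⊤ := by
      intro h; rw [h] at h2; simp at h2
    rw [h2, add_comm]
    exact ENNReal.lt_add_right hfin h3.ne'
  rw [h1, ENNReal.ofReal_mul (by positivity)]
  exact ENNReal.mul_lt_mul_right (by simp [Real.exp_pos]) ENNReal.ofReal_ne_top h4

lemma layer {n : ℕ} {f : Eucl n → ℝ} (hf : MemQ0 f) :
    ENNReal.ofReal (∫ x, f x) = ∫⁻ t in Set.Ici (0:ℝ), ENNReal.ofReal (supNorm f * Real.exp (-t)) *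
      volume {x | supNorm f * Real.exp (-t) ≤ f x} := by
  set M := supNorm f with hM
  have hM0 : 0 < M := supNorm_pos hf
  rw [ofReal_integral_eq_lintegral_ofReal hf.2.2.2.1 (Filter.Eventually.of_forall hf.1),
    lintegral_eq_lintegral_meas_le _ (Filter.Eventually.of_forall hf.1) (meas_of_mem hf).aemeasurable]
  have himg : Set.image (fun t : ℝ => M * Real.exp (-t)) (Set.Ici 0) = Set.Ioc 0 M := by
    ext s
    constructor
    · rintro ⟨t, ht, rfl⟩
      refine ⟨by positivity, ?_⟩
      have : Real.exp (-t) ≤ 1 := Real.exp_le_one_iff.2 (by simpa using ht)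
      simp only
      nlinarith
    · rintro ⟨h1, h2⟩
      refine ⟨Real.log (M / s), Real.log_nonneg ((one_le_div h1).2 h2), ?_⟩
      simp only
      rw [Real.exp_neg, Real.exp_log (by positivity)]
      field_simp
  have hcv := lintegral_image_eq_lintegral_abs_deriv_mul (s := Set.Ici 0) (f := fun t : ℝ => M * Real.exp (-t))
    (f' := fun t => -(M * Real.exp (-t))) measurableSet_Ici (fun t _ => by
      have := ((hasDerivAt_neg t).exp.const_mul M).hasDerivWithinAt (s := Set.Ici 0)
      exact this.congr_deriv (by ring)) (fun a _ b _ h => by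
      simp only at h
      have := Real.exp_injective (mul_left_cancel₀ hM0.ne' h)
      linarith) (fun s => volume {x | s ≤ f x})
  rw [himg] at hcv
  have h0 : ∫⁻ s in Set.Ioi M, volume {x | s ≤ f x} = 0 := by
    rw [setLIntegral_congr_fun measurableSet_Ioi (g := fun _ => 0)]
    · simp
    · intro s hs
      have : {x | s ≤ f x} = ∅ := by
        ext x
        simp only [Set.mem_setOf_eq, Set.mem_empty_iff_false, iff_false, not_le]
        exact (le_supNorm hf x).trans_lt hs
      simp [this]
  rw [← Set.Ioc_union_Ioi_eq_Ioi hM0.le, lintegral_union measurableSet_Ioi (Set.Ioc_disjoint_Ioi le_rfl), h0,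
    add_zero, hcv]
  refine lintegral_congr fun t => ?_
  rw [abs_neg, abs_of_pos (by positivity)]

lemma level {n : ℕ} (hn : 0 < n) {f : Eucl n → ℝ} (hf : MemQ0 f) :
    ∃ t : ℝ, 0 ≤ t ∧ ENNReal.ofReal ((∫ x, f x) / (supNorm f * Real.exp n * n.factorial) * (n + t) ^ n) <
      volume {x | supNorm f * Real.exp (-t) ≤ f x} := by
  by_contra! hcon
  have hl := layer hf
  set M := supNorm f with hM
  have hM0 : 0 < M := supNorm_pos hf
  have hI := hf.2.2.2.2
  set I := ∫ x, f x
  set c := I / (M * Real.exp n * n.factorial) with hc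
  have hc0 : 0 < c := by positivity
  have h1 : ENNReal.ofReal I ≤ ENNReal.ofReal (M * c) *
      ∫⁻ t in Set.Ici (0:ℝ), ENNReal.ofReal (Real.exp (-t) * (n + t) ^ n) := by
    rw [hl, ← lintegral_const_mul _ (by fun_prop)]
    refine setLIntegral_mono (by fun_prop) fun t ht => ?_
    have ht0 : (0:ℝ) ≤ t := ht
    calc _ ≤ ENNReal.ofReal (M * Real.exp (-t)) * ENNReal.ofReal (c * (n + t) ^ n) := by
          gcongr; exact hcon t ht
      _ = _ := by
        rw [← ENNReal.ofReal_mul (by positivity), ← ENNReal.ofReal_mul (by positivity)]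
        congr 1; ring
  have h2 : ENNReal.ofReal (M * c) *
      ∫⁻ t in Set.Ici (0:ℝ), ENNReal.ofReal (Real.exp (-t) * (n + t) ^ n) < ENNReal.ofReal I := by
    have h3 := ENNReal.mul_lt_mul_right (a := ENNReal.ofReal (M * c)) (by simp; positivity)
      ENNReal.ofReal_ne_top (gamma_tail n hn)
    refine h3.trans_eq ?_
    rw [← ENNReal.ofReal_mul (by positivity), hc]
    congr 1
    field_simp
  exact absurd (h1.trans_lt h2) (lt_irrefl _)

lemma f2_side {n : ℕ} (hn : 0 < n) {f : Eucl n → ℝ} (hf : MemQ0 f) :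
    ∃ (v : Fin n → Eucl n) (L : ℝ), 0 < L ∧
      (∀ i, v i ≠ 0 → ‖v i‖ * projL1 f (hyp (v i)) ≤ (∫ x, f x) * L) ∧
      n.factorial * ((∫ x, f x) / (supNorm f * Real.exp n * n.factorial) * L ^ n) ^ 2 ≤
        (2 * Real.pi * Real.exp 1) ^ n * (rowM v).det ^ 2 := by
  obtain ⟨t, ht0, ht⟩ := level hn hf
  set M := supNorm f with hM
  have hM0 : 0 < M := supNorm_pos hf
  have hI := hf.2.2.2.2
  set c := (∫ x, f x) / (M * Real.exp n * n.factorial) with hc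
  have hc0 : 0 < c := by positivity
  have hL : 0 < (n : ℝ) + t := by positivity
  set S := {x | M * Real.exp (-t) ≤ f x} with hS
  have hSm : MeasurableSet S := meas_of_mem hf measurableSet_Ici
  have hmono : Monotone fun k : ℕ => S ∩ Metric.closedBall (0 : Eucl n) k := by
    intro a b hab
    exact Set.inter_subset_inter_right _ (Metric.closedBall_subset_closedBall (by exact_mod_cast hab))
  have hU : ⋃ k : ℕ, S ∩ Metric.closedBall (0 : Eucl n) k = S := by
    rw [← Set.inter_iUnion, Metric.iUnion_closedBall_nat, Set.inter_univ]
  rw [← hU, hmono.measure_iUnion, lt_iSup_iff] at ht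
  obtain ⟨k, hk⟩ := ht
  have hpos : volume (S ∩ Metric.closedBall (0 : Eucl n) k) ≠ 0 := (bot_le.trans_lt hk).ne'
  obtain ⟨y0, hy0⟩ := nonempty_of_measure_ne_zero hpos
  set K := (fun x : Eucl n => x + y0) ⁻¹' (S ∩ Metric.closedBall (0 : Eucl n) k) with hK
  have hKv : volume K = volume (S ∩ Metric.closedBall (0 : Eucl n) k) := measure_preimage_add_right _ _ _
  have hKm : MeasurableSet K := (measurable_add_const y0) (hSm.inter Metric.isClosed_closedBall.measurableSet)
  have hKb : Bornology.IsBounded K := by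
    refine (Metric.isBounded_closedBall (x := -y0) (r := (k:ℝ))).subset fun x hx => ?_
    have := hx.2
    simp only [Metric.mem_closedBall, dist_zero_right] at this
    rw [Metric.mem_closedBall, dist_eq_norm, sub_neg_eq_add]
    exact this
  obtain ⟨v, hvK, hvd⟩ := exists_simplex K hKm hKb (hKv ▸ hpos)
  refine ⟨v, n + t, hL, ?_, ?_⟩
  · intro i hi
    have hr : 0 < ‖v i‖ := norm_pos_iff.2 hi
    have hA := lemmaA hf (‖v i‖⁻¹ • v i) (unit_of hi) ‖v i‖ hr y0 (M * Real.exp (-t)) (by positivity)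
      hy0.1 (by
        have := (hvK i).1
        rw [smul_smul, mul_inv_cancel₀ hr.ne', one_smul, add_comm]
        exact this)
    rw [projL1_eq hf]
    refine hA.2.trans (le_of_eq ?_)
    congr 2
    rw [← hM, Real.exp_neg]
    have : M / (M * (Real.exp t)⁻¹) = Real.exp t := by field_simp
    rw [this, Real.log_exp]
  · refine le_trans ?_ hvd
    have hfin : volume K ≠ ⊤ := hKb.measure_lt_top.ne
    have : c * (n + t) ^ n ≤ (volume K).toReal := by
      rw [← hKv] at hk
      exact (ENNReal.ofReal_le_iff_le_toReal hfin).1 hk.le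
    gcongr


lemma num_const : 2 * Real.pi * Real.exp 1 ≤ 17.08 := by
  have h1 := Real.pi_lt_d4
  have h2 := Real.exp_one_lt_d9
  have h3 := Real.pi_pos
  have : Real.pi * Real.exp 1 ≤ 3.1416 * 2.7182818286 := by gcongr
  norm_num at this ⊢
  linarith

lemma num_big (k : ℕ) : (126.21:ℝ) ^ (k+6) * (k+6).factorial ≤ 64 ^ (k+6) * ((k:ℝ)+6) ^ (k+6) := by
  induction k with
  | zero => norm_num [Nat.factorial]
  | succ k ih =>
    have hb : (2:ℝ) * ((k:ℝ)+6)^(k+6) ≤ ((k:ℝ)+7)^(k+6) := by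
      have := one_add_mul_le_pow (a := 1/((k:ℝ)+6)) (by have : (0:ℝ) ≤ 1/((k:ℝ)+6) := by positivity
                                                        linarith) (k+6)
      have h2 : (1 + 1/((k:ℝ)+6)) * ((k:ℝ)+6) = k+7 := by field_simp; ring
      rw [← h2, mul_pow]
      gcongr
      refine le_trans (le_of_eq ?_) this
      push_cast; field_simp; norm_num
    have e : k + 1 + 6 = (k+6)+1 := by ring
    rw [e, Nat.factorial_succ]
    push_cast
    have e2 : (k:ℝ)+1+6 = k+7 := by ring
    have e3 : (k:ℝ)+6+1 = k+7 := by ring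
    rw [e2, e3]
    calc (126.21:ℝ)^(k+6+1) * (((k:ℝ)+7) * (k+6).factorial)
        = 126.21 * (k+7) * (126.21^(k+6) * (k+6).factorial) := by ring
      _ ≤ 126.21 * (k+7) * (64^(k+6) * ((k:ℝ)+6)^(k+6)) := by gcongr
      _ ≤ 128 * (k+7) * (64^(k+6) * ((k:ℝ)+6)^(k+6)) := by gcongr; norm_num
      _ = 64 * (k+7) * 64^(k+6) * (2 * ((k:ℝ)+6)^(k+6)) := by ring
      _ ≤ 64 * (k+7) * 64^(k+6) * ((k:ℝ)+7)^(k+6) := by gcongr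
      _ = _ := by ring

lemma numer (m : ℕ) : ((((m:ℝ)+2)/(m+1))^((m+2)*(m+1)))^2 * (2 * Real.pi * Real.exp 1)^(m+2) * (m+2).factorial
    ≤ 64^(m+2) * ((m:ℝ)+2)^(m+2) := by
  have hc := num_const
  have hc0 : 0 ≤ 2 * Real.pi * Real.exp 1 := by positivity
  have step : ((((m:ℝ)+2)/(m+1))^((m+2)*(m+1)))^2 * (2 * Real.pi * Real.exp 1)^(m+2) * (m+2).factorial
     ≤ ((((m:ℝ)+2)/(m+1))^((m+2)*(m+1)))^2 * 17.08^(m+2) * (m+2).factorial := by gcongr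
  refine step.trans ?_
  rcases lt_or_ge m 4 with h | h
  · interval_cases m <;> norm_num [Nat.factorial]
  · obtain ⟨k, rfl⟩ := Nat.exists_eq_add_of_le' h
    have h1 : ((((k+4:ℕ):ℝ)+2)/(((k+4:ℕ):ℝ)+1))^((k+4+2)*(k+4+1)) ≤ 2.7182818286^(k+4+2) := by
      rw [mul_comm, pow_mul]
      gcongr
      have : (((k+4:ℕ):ℝ)+2)/(((k+4:ℕ):ℝ)+1) ≤ Real.exp (1/(((k+4:ℕ):ℝ)+1)) := by
        refine le_trans (le_of_eq ?_) (Real.add_one_le_exp _)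
        field_simp; ring
      calc _ ≤ (Real.exp (1/(((k+4:ℕ):ℝ)+1)))^(k+4+1) := by gcongr
        _ = Real.exp 1 := by
          rw [← Real.exp_nat_mul]; congr 1; push_cast; field_simp
        _ ≤ _ := Real.exp_one_lt_d9.le
    calc _ ≤ ((2.7182818286:ℝ)^(k+4+2))^2 * 17.08^(k+4+2) * (k+4+2).factorial := by gcongr
      _ = (2.7182818286^2*17.08)^(k+6) * (k+6).factorial := by
        rw [mul_pow, ← pow_mul, ← pow_mul, mul_comm (k+4+2) 2]
      _ ≤ (126.21:ℝ) ^ (k+6) * (k+6).factorial := by gcongr; norm_num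
      _ ≤ _ := num_big k
      _ = _ := by push_cast; ring

lemma combine (m : ℕ) (f₁ f₂ : Eucl (m+2) → ℝ) (hf₁ : MemQ0 f₁) (hf₂ : MemQ0 f₂)
    (hcond : ∀ θ : Eucl (m+2), ‖θ‖ = 1 →
      projL1 f₁ (Submodule.span ℝ {θ})ᗮ ≤ projL1 f₂ (Submodule.span ℝ {θ})ᗮ) :
    supNorm f₁ * (∫ x, f₁ x)^(m+1) ≤
      (8 * Real.exp 1 * Real.sqrt ((m:ℝ)+2))^(m+2) * (supNorm f₂ * (∫ x, f₂ x)^(m+1)) := by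
  obtain ⟨v, L, hL, hv, hdet⟩ := f2_side (by omega) hf₂
  have hM₂ := supNorm_pos hf₂
  have hI₂ : 0 < ∫ x, f₂ x := hf₂.2.2.2.2
  have hM₁ := supNorm_pos hf₁
  have hI₁ : 0 < ∫ x, f₁ x := hf₁.2.2.2.2
  set I₂ := ∫ x, f₂ x
  set I₁ := ∫ x, f₁ x
  set M₂ := supNorm f₂
  set M₁ := supNorm f₁
  have hd0 : (rowM v).det ≠ 0 := by
    intro h
    rw [h] at hdet
    have : 0 < ((m+2).factorial : ℝ) * (I₂ / (M₂ * Real.exp ((m+2:ℕ):ℝ) * (m+2).factorial) * L^(m+2))^2 := by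
      positivity
    simp at hdet
    simp at this
    linarith
  have h1 := f1_side hf₁ v hd0
  have hprod : ∏ i, ‖v i‖ * projL1 f₁ (hyp (v i)) ≤ (I₂ * L)^(m+2) := by
    calc _ ≤ ∏ i : Fin (m+2), (I₂ * L) := by
          refine Finset.prod_le_prod (fun i _ => mul_nonneg (norm_nonneg _) (projL1_nonneg hf₁ _)) fun i _ => ?_
          refine le_trans ?_ (hv i (row_ne_zero v hd0 i))
          exact mul_le_mul_of_nonneg_left (hcond _ (unit_of (row_ne_zero v hd0 i))) (norm_nonneg _)
      _ = _ := by simp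
  set D := |(rowM v).det| with hD
  have hD0 : 0 < D := abs_pos.2 hd0
  rw [← sq_abs (rowM v).det, ← hD] at hdet
  set p := (((m:ℝ)+2)/(m+1))^((m+2)*(m+1)) with hp
  have hp0 : 0 < p := by positivity
  have h2 : (M₁ * I₁^(m+1)) * D ≤ p * (I₂*L)^(m+2) := by
    have : M₁ * I₁^(m+1) ≤ p * ((I₂*L)^(m+2) / D) := h1.trans (by gcongr)
    calc _ ≤ p * ((I₂*L)^(m+2) / D) * D := by gcongr
      _ = _ := by field_simp
  set q := (2 * Real.pi * Real.exp 1)^(m+2) with hq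
  have hq0 : 0 < q := by positivity
  set F : ℝ := ((m+2).factorial : ℝ) with hF
  have hF0 : 0 < F := by positivity
  set E : ℝ := Real.exp ((m+2:ℕ):ℝ) with hE
  have hE0 : 0 < E := by positivity
  have hnum : p^2 * q * F ≤ 64^(m+2) * ((m:ℝ)+2)^(m+2) := numer m
  set A := M₁ * I₁^(m+1) with hA
  have hA0 : 0 < A := by positivity
  refine (sq_le_sq₀ hA0.le (by positivity)).1 ?_
  have h3 : A^2 * D^2 ≤ p^2 * (I₂^(m+2) * L^(m+2))^2 := by
    rw [← mul_pow, ← mul_pow, ← mul_pow]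
    exact pow_le_pow_left₀ (by positivity) h2 2
  set l := L^(m+2) with hl
  have hl0 : 0 < l := by positivity
  have h4 : A^2 * (F * (I₂ / (M₂ * E * F) * l)^2) ≤ q * (p^2 * (I₂^(m+2) * l)^2) := by
    calc _ ≤ A^2 * (q * D^2) := by gcongr
      _ = q * (A^2 * D^2) := by ring
      _ ≤ _ := by gcongr
  have h5 : A^2 ≤ p^2 * q * F * E^2 * (M₂ * I₂^(m+1))^2 := by
    have e1 : A^2 * (F * (I₂ / (M₂ * E * F) * l)^2) = A^2 * (I₂^2*l^2/(M₂^2*E^2*F)) := by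
      field_simp
    have e2 : q * (p^2 * (I₂^(m+2) * l)^2) = (p^2 * q * F * E^2 * (M₂ * I₂^(m+1))^2) * (I₂^2*l^2/(M₂^2*E^2*F)) := by
      field_simp; ring
    rw [e1, e2] at h4
    exact le_of_mul_le_mul_right h4 (by positivity)
  have e3 : ((8 * Real.exp 1 * Real.sqrt ((m:ℝ)+2))^(m+2))^2 = 64^(m+2) * ((m:ℝ)+2)^(m+2) * E^2 := by
    have : E = Real.exp 1 ^ (m+2) := by rw [hE, ← Real.exp_nat_mul, mul_one]
    rw [this, ← pow_mul, mul_comm (m+2) 2, pow_mul, mul_pow, mul_pow, Real.sq_sqrt (by positivity), mul_pow, mul_pow,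
      pow_right_comm (Real.exp 1)]
    norm_num; ring
  refine h5.trans ?_
  rw [mul_pow ((8 * Real.exp 1 * Real.sqrt ((m:ℝ)+2))^(m+2)), e3]
  gcongr

/-- **Functional Shephard problem of codimension one** (Corollary 3.2, second bound). -/
theorem functional_shephard_codim_one_sup_int (n : ℕ) (hn : 2 ≤ n)
    (f₁ f₂ : Eucl n → ℝ) (hf₁ : MemQ0 f₁) (hf₂ : MemQ0 f₂)
    (hcond : ∀ θ : Eucl n, ‖θ‖ = 1 →
      projL1 f₁ (Submodule.span ℝ {θ})ᗮ ≤ projL1 f₂ (Submodule.span ℝ {θ})ᗮ) :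
    supNorm f₁ ^ ((1 : ℝ) / n) * (∫ x, f₁ x) ^ (((n : ℝ) - 1) / n) ≤
      8 * Real.exp 1 * Real.sqrt n *
        (supNorm f₂ ^ ((1 : ℝ) / n) * (∫ x, f₂ x) ^ (((n : ℝ) - 1) / n)) := by
  obtain ⟨m, rfl⟩ := Nat.exists_eq_add_of_le' hn
  have key := combine m f₁ f₂ hf₁ hf₂ hcond
  have conv : ∀ f : Eucl (m+2) → ℝ, MemQ0 f →
      supNorm f ^ ((1 : ℝ) / (m+2:ℕ)) * (∫ x, f x) ^ ((((m+2:ℕ) : ℝ) - 1) / (m+2:ℕ))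
        = (supNorm f * (∫ x, f x)^(m+1)) ^ ((1 : ℝ) / (m+2:ℕ)) := by
    intro f hf
    have hM := supNorm_pos hf
    have hI : 0 < ∫ x, f x := hf.2.2.2.2
    rw [Real.mul_rpow hM.le (by positivity), ← Real.rpow_natCast (∫ x, f x) (m+1), ← Real.rpow_mul hI.le]
    congr 2
    push_cast
    ring
  rw [conv f₁ hf₁, conv f₂ hf₂]
  have hM := supNorm_pos hf₂
  have hI : 0 < ∫ x, f₂ x := hf₂.2.2.2.2
  have hM1 := supNorm_pos hf₁
  have hI1 : 0 < ∫ x, f₁ x := hf₁.2.2.2.2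
  have h := Real.rpow_le_rpow (by positivity) key (z := (1 : ℝ) / (m+2:ℕ)) (by positivity)
  refine h.trans (le_of_eq ?_)
  rw [Real.mul_rpow (by positivity) (by positivity)]
  congr 1
  rw [one_div, Real.pow_rpow_inv_natCast (by positivity) (by omega)]
  push_cast
  rfl
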